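/- arXiv:2305.12613 — 7 statements merged into one kernel-verified Lean document; each statement's English description precedes it below -/
import Mathlib

section
/- Fusion inequality: Let G be a finite abstract simplicial complex, K ⊆ G a subcomplex, and U = G \ K the open complement. Then for every p ≥ 0 the Betti numbers satisfy b_p(G) ≤ b_p(K) + b_p(U). -/
open Matrix

/-- A finite abstract simplicial complex: a finite nonempty collection of nonempty
finite subsets of ℕ closed under taking nonempty subsets. -/
def IsComplex (G : Finset (Finset ℕ)) : Prop :=
  G.Nonempty ∧ ∅ ∉ G ∧ ∀ x ∈ G, ∀ y : Finset ℕ, y ⊆ x → y.Nonempty → y ∈ G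

/-- A subcomplex: a set of sets closed under taking nonempty subsets. -/
def IsSubcomplex (K : Finset (Finset ℕ)) : Prop :=
  ∀ x ∈ K, ∀ y : Finset ℕ, y ⊆ x → y.Nonempty → y ∈ K

/-- The incidence sign s(x,y) = (-1)^i when y is obtained from x by deleting the
(i+1)-th smallest element of x. -/
noncomputable def incSign (x y : Finset ℕ) : ℝ :=
  (-1 : ℝ) ^ (x.filter (fun v => ∃ w ∈ x \ y, v < w)).card

/-- The exterior derivative matrix of a subset A of a simplicial complex. -/
noncomputable def extDer (A : Finset (Finset ℕ)) : Matrix A A ℝ :=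
  Matrix.of fun x y =>
    if (y : Finset ℕ) ⊆ (x : Finset ℕ) ∧ (x : Finset ℕ).card = (y : Finset ℕ).card + 1
    then incSign (x : Finset ℕ) (y : Finset ℕ) else 0

/-- The Dirac matrix D = d + dᵀ. -/
noncomputable def dirac (A : Finset (Finset ℕ)) : Matrix A A ℝ :=
  extDer A + (extDer A)ᵀ

/-- The Hodge Laplacian L = D². -/
noncomputable def hodge (A : Finset (Finset ℕ)) : Matrix A A ℝ :=
  dirac A * dirac A

/-- The block of the Hodge Laplacian acting on p-forms: the submatrix of L on
the p-simplices (sets of cardinality p+1). -/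
noncomputable def hodgeBlock (A : Finset (Finset ℕ)) (p : ℕ) :
    Matrix (A.filter fun x => x.card = p + 1) (A.filter fun x => x.card = p + 1) ℝ :=
  (hodge A).submatrix
    (fun x => ⟨x.1, (Finset.mem_filter.mp x.2).1⟩)
    (fun x => ⟨x.1, (Finset.mem_filter.mp x.2).1⟩)

/-- The p-th Betti number: the dimension of the kernel of the p-form block of the
Hodge Laplacian. -/
noncomputable def betti (A : Finset (Finset ℕ)) (p : ℕ) : ℕ :=
  Module.finrank ℝ (LinearMap.ker (Matrix.toLin' (hodgeBlock A p)))

/-!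
Write `A # n` for the members of `A` of cardinality `n` and `dₙ` for the exterior derivative from
`A # n` to `A # (n + 1)`. If `A` is order-convex then `dₙ₊₁ dₙ = 0`, so that the ranges of the two
summands of `L = dᵀ d + d dᵀ` are orthogonal and
`b_p(A) + rank dₚ₊₁ + rank dₚ = |A # (p + 1)|`. A member of `K` has no face outside `K`, so `dₙ` of
`G` is block triangular with diagonal blocks the `dₙ` of `K` and of `G \ K`. The rank of a block
triangular matrix is at least the sum of the ranks of its diagonal blocks, while cardinalities are
additive; hence the Betti numbers are subadditive.
-/

open scoped Finset

section Rank

variable {F m n k m₁ n₁ m₂ n₂ : Type*} [Field F]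

theorem rank_add_le_rank_add_rank [Fintype n] [Finite m] (M N : Matrix m n F) :
    (M + N).rank ≤ M.rank + N.rank := by
  rw [Matrix.rank, mulVecLin_add]
  exact (Submodule.finrank_mono (LinearMap.range_add_le _ _)).trans
    (Submodule.finrank_add_le_finrank_add_finrank _ _)

/- Rank-nullity for the restriction of the column space of `M` to the rows `r₁`: its range contains
the columns of the first block, and its kernel contains the columns `c₂` of `M`. -/
theorem rank_submatrix_add_rank_submatrix_le [Fintype n] [Fintype n₁] [Fintype n₂]
    (M : Matrix m n F) (r₁ : m₁ → m) (c₁ : n₁ → n) (r₂ : m₂ → m) (c₂ : n₂ → n)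
    (h : ∀ i j, M (r₁ i) (c₂ j) = 0) :
    (M.submatrix r₁ c₁).rank + (M.submatrix r₂ c₂).rank ≤ M.rank := by
  simp only [rank_eq_finrank_span_cols]
  let S := Submodule.span F (Set.range M.col)
  have : FiniteDimensional F S := .span_of_finite F (Set.finite_range _)
  let restrict₁ := (LinearMap.funLeft F F r₁).domRestrict S
  let restrict₂ := (LinearMap.funLeft F F r₂).domRestrict S
  let col (j : n) : S := ⟨M.col j, Submodule.subset_span ⟨j, rfl⟩⟩
  have le_range : Submodule.span F (Set.range (M.submatrix r₁ c₁).col) ≤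
      LinearMap.range restrict₁ := by
    rw [Submodule.span_le]
    rintro _ ⟨j, rfl⟩
    exact ⟨col (c₁ j), rfl⟩
  have le_map_ker : Submodule.span F (Set.range (M.submatrix r₂ c₂).col) ≤
      (LinearMap.ker restrict₁).map restrict₂ := by
    rw [Submodule.span_le]
    rintro _ ⟨j, rfl⟩
    exact ⟨col (c₂ j), LinearMap.mem_ker.mpr (funext fun i => h i j), rfl⟩
  calc _ ≤ Module.finrank F (LinearMap.range restrict₁) +
        Module.finrank F (LinearMap.ker restrict₁) :=
      add_le_add (Submodule.finrank_mono le_range)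
        ((Submodule.finrank_mono le_map_ker).trans (Submodule.finrank_map_le _ _))
    _ = Module.finrank F S := restrict₁.finrank_range_add_finrank_ker

variable [LinearOrder F] [IsStrictOrderedRing F] [Fintype m] [Fintype n] [Fintype k]

theorem rank_transpose_mul_self_add_self_mul_transpose
    {P : Matrix m n F} {Q : Matrix n k F} (hPQ : P * Q = 0) :
    (Pᵀ * P + Q * Qᵀ).rank = P.rank + Q.rank := by
  refine le_antisymm ?_ ?_
  · simpa only [rank_transpose_mul_self, rank_self_mul_transpose] using
      rank_add_le_rank_add_rank (Pᵀ * P) (Q * Qᵀ)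
  let R := fromRows P Qᵀ
  have gram : R * Rᵀ = fromBlocks (P * Pᵀ) 0 0 (Qᵀ * Q) := by
    rw [transpose_fromRows, fromRows_mul_fromCols, transpose_transpose, hPQ, ← transpose_mul, hPQ,
      transpose_zero]
  calc P.rank + Q.rank = (P * Pᵀ).rank + (Qᵀ * Q).rank := by
        rw [rank_self_mul_transpose, rank_transpose_mul_self]
    _ ≤ (R * Rᵀ).rank := by
        rw [gram]
        exact rank_submatrix_add_rank_submatrix_le (fromBlocks (P * Pᵀ) 0 0 (Qᵀ * Q))
          Sum.inl Sum.inl Sum.inr Sum.inr fun _ _ => rfl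
    _ = (Rᵀ * R).rank := by rw [rank_self_mul_transpose, rank_transpose_mul_self]
    _ = (Pᵀ * P + Q * Qᵀ).rank := by
        rw [transpose_fromRows, fromCols_mul_fromRows, transpose_transpose]

end Rank

section Slice

variable {α : Type*} {𝒜 ℬ : Finset (Finset α)}

theorem sum_slice {M : Type*} [AddCommMonoid M] {n : ℕ} (f : 𝒜 → M)
    (hf : ∀ z : 𝒜, z.1.card ≠ n → f z = 0) :
    ∑ z : 𝒜 # n, f ⟨z, Finset.slice_subset z.2⟩ = ∑ z, f z := by
  let incl (z : 𝒜 # n) : 𝒜 := ⟨z, Finset.slice_subset z.2⟩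
  have incl_injective : Function.Injective incl := fun _ _ h =>
    Subtype.ext (Subtype.mk.inj h)
  refine Fintype.sum_of_injective incl incl_injective _ f (fun z hz => hf z fun h => ?_)
    fun _ => rfl
  exact hz ⟨⟨z, Finset.mem_slice.mpr ⟨z.2, h⟩⟩, rfl⟩

theorem card_slice_add_card_slice_sdiff [DecidableEq α] (h : ℬ ⊆ 𝒜) (n : ℕ) :
    (ℬ # n).card + ((𝒜 \ ℬ) # n).card = (𝒜 # n).card := by
  simp only [Finset.slice]
  rw [← Finset.card_union_of_disjoint (Finset.disjoint_filter_filter Finset.disjoint_sdiff),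
    ← Finset.filter_union, Finset.union_sdiff_of_subset h]

theorem eq_insert_or_eq_insert_of_subset_insert_insert [DecidableEq α] {a b : α} {y z : Finset α}
    (hzy : z ⊆ y) (hcard : z.card + 1 = y.card) (hy : y ⊆ insert b (insert a z)) :
    y = insert a z ∨ y = insert b z := by
  obtain ⟨c, hc, rfl⟩ := Finset.exists_eq_insert_iff.mpr ⟨hzy, hcard⟩
  have c_mem := hy (Finset.mem_insert_self c z)
  grind

end Slice

section IncidenceSign

theorem incSign_insert {a : ℕ} {y : Finset ℕ} (ha : a ∉ y) :
    incSign (insert a y) y = (-1) ^ (y.filter (· < a)).card := by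
  have filter_eq : (insert a y).filter (fun v => ∃ w ∈ insert a y \ y, v < w) =
      y.filter (· < a) := by
    simp [ha, Finset.filter_insert]
  rw [incSign, filter_eq]

theorem incSign_insert_insert {a b : ℕ} {z : Finset ℕ} (hab : a ≠ b) (ha : a ∉ z) (hb : b ∉ z) :
    incSign (insert b (insert a z)) (insert a z) =
      (if a < b then -1 else 1) * incSign (insert b z) z := by
  have hb' : b ∉ insert a z := by simp [hab.symm, hb]
  rw [incSign_insert hb', incSign_insert hb, Finset.filter_insert]
  split_ifs
  · rw [Finset.card_insert_of_notMem (by simp [ha]), pow_succ']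
  · rw [one_mul]

theorem incSign_mul_incSign_add_swap {a b : ℕ} {z : Finset ℕ} (hab : a ≠ b) (ha : a ∉ z)
    (hb : b ∉ z) :
    incSign (insert b (insert a z)) (insert a z) * incSign (insert a z) z +
      incSign (insert b (insert a z)) (insert b z) * incSign (insert b z) z = 0 := by
  have h_swap := incSign_insert_insert hab.symm hb ha
  rw [Finset.insert_comm] at h_swap
  rw [incSign_insert_insert hab ha hb, h_swap]
  rcases hab.lt_or_gt with h | h <;> simp [h, h.not_gt, mul_comm]

end IncidenceSign

section Coboundary

variable {A : Finset (Finset ℕ)}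

/-- The block of the exterior derivative that maps functions on the members of `A` of cardinality
`n` to functions on those of cardinality `n + 1`. Indexing by cardinality instead of dimension puts
the incoming derivative of the `0`-simplices, which is `coboundary A 0`, on the same footing. -/
noncomputable def coboundary (A : Finset (Finset ℕ)) (n : ℕ) :
    Matrix (A # (n + 1)) (A # n) ℝ :=
  (extDer A).submatrix (fun x => ⟨x, Finset.slice_subset x.2⟩)
    (fun y => ⟨y, Finset.slice_subset y.2⟩)

theorem coboundary_apply {n : ℕ} (x : A # (n + 1)) (y : A # n) :
    coboundary A n x y = if (y : Finset ℕ) ⊆ x then incSign x y else 0 := by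
  simp [coboundary, extDer, (Finset.mem_slice.mp x.2).2, (Finset.mem_slice.mp y.2).2]

theorem coboundary_mul_coboundary (hA : (A : Set (Finset ℕ)).OrdConnected) (n : ℕ) :
    coboundary A (n + 1) * coboundary A n = 0 := by
  ext ⟨x, hx⟩ ⟨z, hz⟩
  rw [Finset.mem_slice] at hx hz
  simp only [mul_apply, coboundary_apply, Matrix.zero_apply, ite_zero_mul_ite_zero]
  by_cases hxz : ∃ y : A # (n + 1), (y : Finset ℕ) ⊆ x ∧ z ⊆ y
  · obtain ⟨⟨y, hy⟩, hyx, hzy⟩ := hxz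
    rw [Finset.mem_slice] at hy
    obtain ⟨a, ha, rfl⟩ := Finset.exists_eq_insert_iff.mpr ⟨hzy, by lia⟩
    obtain ⟨b, hb, rfl⟩ := Finset.exists_eq_insert_iff.mpr ⟨hyx, by lia⟩
    obtain ⟨hba, hbz⟩ : b ≠ a ∧ b ∉ z := by simpa using hb
    have hbzx : insert b z ⊆ insert b (insert a z) := Finset.insert_subset_insert _ hzy
    have insert_b_mem : insert b z ∈ A # (n + 1) := Finset.mem_slice.mpr
      ⟨hA.out hz.1 hx.1 ⟨Finset.subset_insert b z, hbzx⟩,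
        by rw [Finset.card_insert_of_notMem hbz, hz.2]⟩
    rw [Fintype.sum_eq_add ⟨insert a z, Finset.mem_slice.mpr hy⟩ ⟨insert b z, insert_b_mem⟩]
    · simpa [hyx, hzy, hbzx] using incSign_mul_incSign_add_swap hba.symm ha hbz
    · have : a ∉ insert b z := by simp [hba.symm, ha]
      grind
    · rintro ⟨y, hy'⟩ hne
      refine if_neg fun ⟨hyx', hzy'⟩ => ?_
      rw [Finset.mem_slice] at hy'
      rcases eq_insert_or_eq_insert_of_subset_insert_insert hzy' (by lia) hyx' with rfl | rfl
      exacts [hne.1 rfl, hne.2 rfl]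
  · exact Finset.sum_eq_zero fun y _ => if_neg fun h => hxz ⟨y, h⟩

end Coboundary

section Betti

variable {A : Finset (Finset ℕ)}

theorem extDer_eq_zero_of_card_ne {x y : A} (h : x.1.card ≠ y.1.card + 1) : extDer A x y = 0 :=
  if_neg fun hxy => h hxy.2

/- The terms `d²` and `(dᵀ)²` of `(d + dᵀ)²` vanish here because they change the cardinality
by `2`. -/
theorem hodge_apply_of_card_eq {x y : A} (h : x.1.card = y.1.card) :
    hodge A x y = ∑ z, extDer A z x * extDer A z y + ∑ z, extDer A x z * extDer A y z := by
  rw [hodge, mul_apply, ← Finset.sum_add_distrib]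
  refine Finset.sum_congr rfl fun z _ => ?_
  simp only [dirac, Matrix.add_apply, transpose_apply]
  have d_sq : extDer A x z * extDer A z y = 0 := by
    by_cases hz : z.1.card = y.1.card + 1
    · rw [extDer_eq_zero_of_card_ne (by lia), zero_mul]
    · rw [extDer_eq_zero_of_card_ne hz, mul_zero]
  have d_transpose_sq : extDer A z x * extDer A y z = 0 := by
    by_cases hz : z.1.card = x.1.card + 1
    · rw [extDer_eq_zero_of_card_ne (x := y) (by lia), mul_zero]
    · rw [extDer_eq_zero_of_card_ne hz, zero_mul]
  linear_combination d_sq + d_transpose_sq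

theorem hodgeBlock_eq (A : Finset (Finset ℕ)) (p : ℕ) :
    hodgeBlock A p = (coboundary A (p + 1))ᵀ * coboundary A (p + 1) +
      coboundary A p * (coboundary A p)ᵀ := by
  ext ⟨x, hx⟩ ⟨y, hy⟩
  obtain ⟨hxA, hx_card⟩ := Finset.mem_filter.mp hx
  obtain ⟨hyA, hy_card⟩ := Finset.mem_filter.mp hy
  calc hodgeBlock A p ⟨x, hx⟩ ⟨y, hy⟩ = hodge A ⟨x, hxA⟩ ⟨y, hyA⟩ := rfl
    _ = ∑ z, extDer A z ⟨x, hxA⟩ * extDer A z ⟨y, hyA⟩ +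
        ∑ z, extDer A ⟨x, hxA⟩ z * extDer A ⟨y, hyA⟩ z :=
      hodge_apply_of_card_eq (hx_card.trans hy_card.symm)
    _ = _ := congrArg₂ (· + ·)
      (sum_slice (n := p + 1 + 1) _ fun z hz => by
        rw [extDer_eq_zero_of_card_ne (by lia), zero_mul]).symm
      (sum_slice (n := p) _ fun z hz => by
        rw [extDer_eq_zero_of_card_ne (by lia), zero_mul]).symm

theorem betti_add_rank_hodgeBlock (A : Finset (Finset ℕ)) (p : ℕ) :
    betti A p + (hodgeBlock A p).rank = (A # (p + 1)).card := by
  have := (toLin' (hodgeBlock A p)).finrank_range_add_finrank_ker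
  rw [Module.finrank_fintype_fun_eq_card, Fintype.card_coe, add_comm] at this
  exact this

theorem betti_add_rank_coboundary_add_rank_coboundary (hA : (A : Set (Finset ℕ)).OrdConnected)
    (p : ℕ) :
    betti A p + ((coboundary A (p + 1)).rank + (coboundary A p).rank) = (A # (p + 1)).card := by
  have rank_hodgeBlock : (hodgeBlock A p).rank =
      (coboundary A (p + 1)).rank + (coboundary A p).rank :=
    (congrArg Matrix.rank (hodgeBlock_eq A p)).trans
      (rank_transpose_mul_self_add_self_mul_transpose (coboundary_mul_coboundary hA p))
  rw [← rank_hodgeBlock, betti_add_rank_hodgeBlock]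

end Betti

section Fusion

variable {G K : Finset (Finset ℕ)}

theorem rank_coboundary_add_rank_coboundary_sdiff_le (hKG : K ⊆ G)
    (hK : ∀ x ∈ K, ∀ y ∈ G, y ⊆ x → y ∈ K) (n : ℕ) :
    (coboundary K n).rank + (coboundary (G \ K) n).rank ≤ (coboundary G n).rank := by
  let incl {A : Finset (Finset ℕ)} (hA : A ⊆ G) (m : ℕ) (x : A # m) : G # m :=
    ⟨x, Finset.filter_subset_filter _ hA x.2⟩
  have hU : G \ K ⊆ G := Finset.sdiff_subset
  refine rank_submatrix_add_rank_submatrix_le (coboundary G n) (incl hKG _) (incl hKG _)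
    (incl hU _) (incl hU _) fun x y => ?_
  rw [coboundary_apply]
  have hx := Finset.slice_subset x.2
  obtain ⟨hyG, hyK⟩ := Finset.mem_sdiff.mp (Finset.slice_subset y.2)
  exact if_neg fun hyx => hyK (hK x hx y hyG hyx)

theorem fusion_inequality_general (hG : (G : Set (Finset ℕ)).OrdConnected) (hKG : K ⊆ G)
    (hK : ∀ x ∈ K, ∀ y ∈ G, y ⊆ x → y ∈ K) (p : ℕ) :
    betti G p ≤ betti K p + betti (G \ K) p := by
  have hK_conn : (K : Set (Finset ℕ)).OrdConnected :=
    ⟨fun z hz x hx y hy => hK x hx y (hG.out (hKG hz) (hKG hx) hy) hy.2⟩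
  have hU_conn : ((G \ K : Finset (Finset ℕ)) : Set (Finset ℕ)).OrdConnected := by
    refine ⟨fun z hz x hx y hy => ?_⟩
    rw [Finset.mem_coe, Finset.mem_sdiff] at *
    exact ⟨hG.out hz.1 hx.1 hy, fun hyK => hz.2 (hK y hyK z hz.1 hy.1)⟩
  have betti_G := betti_add_rank_coboundary_add_rank_coboundary hG p
  have betti_K := betti_add_rank_coboundary_add_rank_coboundary hK_conn p
  have betti_U := betti_add_rank_coboundary_add_rank_coboundary hU_conn p
  have rank_out := rank_coboundary_add_rank_coboundary_sdiff_le hKG hK (p + 1)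
  have rank_in := rank_coboundary_add_rank_coboundary_sdiff_le hKG hK p
  have card_eq := card_slice_add_card_slice_sdiff hKG (p + 1)
  lia

theorem IsComplex.nonempty_of_mem (hG : IsComplex G) {x : Finset ℕ} (hx : x ∈ G) : x.Nonempty :=
  Finset.nonempty_iff_ne_empty.mpr fun h => hG.2.1 (h ▸ hx)

theorem IsComplex.ordConnected (hG : IsComplex G) : (G : Set (Finset ℕ)).OrdConnected :=
  ⟨fun _ hz x hx y hy => hG.2.2 x hx y hy.2 ((hG.nonempty_of_mem hz).mono hy.1)⟩

end Fusion

/-- **Fusion inequality.** If K is a subcomplex of the finite abstract simplicial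
complex G and U = G \ K is the open complement, then b_p(G) ≤ b_p(K) + b_p(U). -/
theorem fusion_inequality (G K : Finset (Finset ℕ)) (hG : IsComplex G)
    (hKG : K ⊆ G) (hK : IsSubcomplex K) (p : ℕ) :
    betti G p ≤ betti K p + betti (G \ K) p :=
  fusion_inequality_general hG.ordConnected hKG
    (fun x hx y hy hyx => hK x hx y hyx (hG.nonempty_of_mem hy)) p
end

section
/- Spectral monotonicity for subcomplexes: Let G be a finite abstract simplicial complex with n elements and K ⊆ G a subcomplex with m elements. Then for every k with 1 ≤ k ≤ m, the k-th smallest eigenvalue of L_K is at most the (k + n − m)-th smallest eigenvalue of L_G; equivalently, after left-padding the ascending eigenvalue list of L_K with n − m zeros, λ_k(L_K) ≤ λ_k(L_G) for all 1 ≤ k ≤ n. -/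
open Matrix

open scoped Classical in
/-- The ascending list of eigenvalues (with multiplicity) of a real symmetric matrix. -/
noncomputable def sortedEigs {α : Type} [Fintype α] [DecidableEq α] (M : Matrix α α ℝ) :
    List ℝ :=
  if hM : M.IsHermitian then Multiset.sort (Finset.univ.val.map hM.eigenvalues) (· ≤ ·)
  else []

/-- The k-th entry (0-indexed) of the list `l` after left-padding it with zeros to length n. -/
noncomputable def padGet (l : List ℝ) (n k : ℕ) : ℝ :=
  if k < n - l.length then 0 else l.getD (k - (n - l.length)) 0

/-!
The Laplacian of a set `A` of simplices is `L_A = D_Aᵀ D_A`, so its eigenvalues are the squared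
singular values of `D_A`. For `K ⊆ G` the matrix `D_K` is the submatrix of `D_G` with rows and
columns in `K`, and by the min-max principle passing to a submatrix decreases every singular value:
if `J` extends vectors by zero, then `‖D_K x‖ ≤ ‖D_G (J x)‖` and `‖J x‖ = ‖x‖`. The `i`-th largest
eigenvalue of `L_K` is thus at most the `i`-th largest of `L_G`; counting from the smallest one
instead shifts the index by `|G| - |K|`.
-/

section SymmetricOperators

open Module RCLike
open scoped InnerProductSpace

theorem exists_ne_zero_forall_dual_apply_eq_zero {𝕜 V ι : Type*} [Field 𝕜] [AddCommGroup V]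
    [Module 𝕜 V] [Fintype ι] (f : ι → Dual 𝕜 V) (h : Fintype.card ι < finrank 𝕜 V) :
    ∃ x ≠ 0, ∀ i, f i x = 0 := by
  have : FiniteDimensional 𝕜 V := finite_of_finrank_pos (Nat.zero_lt_of_lt h)
  have hker : (LinearMap.pi f).ker ≠ ⊥ := LinearMap.ker_ne_bot_of_finrank_lt (by simpa using h)
  obtain ⟨x, hx, hx₀⟩ := (Submodule.ne_bot_iff _).mp hker
  exact ⟨x, hx₀, congrFun hx⟩

variable {𝕜 E F : Type*} [RCLike 𝕜]
  [NormedAddCommGroup E] [InnerProductSpace 𝕜 E] [FiniteDimensional 𝕜 E]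
  [NormedAddCommGroup F] [InnerProductSpace 𝕜 F] [FiniteDimensional 𝕜 F]
  {m n : ℕ} {S : E →ₗ[𝕜] E} {T : F →ₗ[𝕜] F}

theorem re_inner_apply_self_eq_sum_eigenvalues (hT : T.IsSymmetric) (hn : finrank 𝕜 F = n)
    (x : F) :
    re ⟪T x, x⟫_𝕜 = ∑ i, hT.eigenvalues hn i * ‖⟪hT.eigenvectorBasis hn i, x⟫_𝕜‖ ^ 2 := by
  rw [← (hT.eigenvectorBasis hn).sum_inner_mul_inner, map_sum]
  refine Finset.sum_congr rfl fun i _ => ?_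
  rw [hT, hT.apply_eigenvectorBasis, inner_smul_right, mul_assoc, re_ofReal_mul,
    inner_mul_symm_re_eq_norm, norm_mul, norm_inner_symm, sq]

theorem eigenvalues_mul_norm_sq_le_re_inner (hT : T.IsSymmetric) (hn : finrank 𝕜 F = n)
    {i : Fin n} {x : F} (hx : ∀ j > i, ⟪hT.eigenvectorBasis hn j, x⟫_𝕜 = 0) :
    hT.eigenvalues hn i * ‖x‖ ^ 2 ≤ re ⟪T x, x⟫_𝕜 := by
  rw [re_inner_apply_self_eq_sum_eigenvalues hT hn,
    ← (hT.eigenvectorBasis hn).sum_sq_norm_inner_right, Finset.mul_sum]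
  refine Finset.sum_le_sum fun j _ => ?_
  obtain hij | hji := lt_or_ge i j
  · simp [hx j hij]
  · gcongr
    exact hT.eigenvalues_antitone hn hji

theorem re_inner_le_eigenvalues_mul_norm_sq (hT : T.IsSymmetric) (hn : finrank 𝕜 F = n)
    {i : Fin n} {x : F} (hx : ∀ j < i, ⟪hT.eigenvectorBasis hn j, x⟫_𝕜 = 0) :
    re ⟪T x, x⟫_𝕜 ≤ hT.eigenvalues hn i * ‖x‖ ^ 2 := by
  rw [re_inner_apply_self_eq_sum_eigenvalues hT hn,
    ← (hT.eigenvectorBasis hn).sum_sq_norm_inner_right, Finset.mul_sum]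
  refine Finset.sum_le_sum fun j _ => ?_
  obtain hji | hij := lt_or_ge j i
  · simp [hx j hji]
  · gcongr
    exact hT.eigenvalues_antitone hn hij

theorem eigenvalues_le_eigenvalues_of_re_inner_le (hS : S.IsSymmetric) (hT : T.IsSymmetric)
    (hm : finrank 𝕜 E = m) (hn : finrank 𝕜 F = n) (J : E →ₗᵢ[𝕜] F)
    (hJ : ∀ x, re ⟪S x, x⟫_𝕜 ≤ re ⟪T (J x), J x⟫_𝕜) {i : Fin m} {j : Fin n} (hji : (j : ℕ) ≤ i) :
    hS.eigenvalues hm i ≤ hT.eigenvalues hn j := by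
  -- Mathlib's eigenvalues decrease, so the eigenvectors of `S` past `i` and those of `T` before `j`
  -- are to be avoided: `m - 1 - i + j < m` linear conditions on `x`.
  let constraint : Finset.Ioi i ⊕ Finset.Iio j → Dual 𝕜 E := Sum.elim
    (fun k => innerₛₗ 𝕜 (hS.eigenvectorBasis hm k))
    (fun k => innerₛₗ 𝕜 (hT.eigenvectorBasis hn k) ∘ₗ J.toLinearMap)
  obtain ⟨x, hx₀, hx⟩ := exists_ne_zero_forall_dual_apply_eq_zero constraint (by
    simp only [Fintype.card_sum, Fintype.card_coe, Fin.card_Ioi, Fin.card_Iio, hm]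
    omega)
  have hxS : ∀ k > i, ⟪hS.eigenvectorBasis hm k, x⟫_𝕜 = 0 := fun k hk =>
    hx (Sum.inl ⟨k, Finset.mem_Ioi.mpr hk⟩)
  have hxT : ∀ k < j, ⟪hT.eigenvectorBasis hn k, J x⟫_𝕜 = 0 := fun k hk =>
    hx (Sum.inr ⟨k, Finset.mem_Iio.mpr hk⟩)
  refine le_of_mul_le_mul_right ?_ (pow_pos (norm_pos_iff.mpr hx₀) 2)
  calc hS.eigenvalues hm i * ‖x‖ ^ 2
      ≤ re ⟪S x, x⟫_𝕜 := eigenvalues_mul_norm_sq_le_re_inner hS hm hxS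
    _ ≤ re ⟪T (J x), J x⟫_𝕜 := hJ x
    _ ≤ hT.eigenvalues hn j * ‖J x‖ ^ 2 := re_inner_le_eigenvalues_mul_norm_sq hT hn hxT
    _ = hT.eigenvalues hn j * ‖x‖ ^ 2 := by rw [J.norm_map]

end SymmetricOperators

section SingularValues

open Module

theorem singularValues_le_singularValues_of_norm_le {𝕜 E E' F F' : Type*} [RCLike 𝕜]
    [NormedAddCommGroup E] [InnerProductSpace 𝕜 E] [FiniteDimensional 𝕜 E]
    [NormedAddCommGroup E'] [InnerProductSpace 𝕜 E'] [FiniteDimensional 𝕜 E']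
    [NormedAddCommGroup F] [InnerProductSpace 𝕜 F] [FiniteDimensional 𝕜 F]
    [NormedAddCommGroup F'] [InnerProductSpace 𝕜 F'] [FiniteDimensional 𝕜 F']
    {S : E →ₗ[𝕜] E'} {T : F →ₗ[𝕜] F'} (J : E →ₗᵢ[𝕜] F) (hJ : ∀ x, ‖S x‖ ≤ ‖T (J x)‖) (i : ℕ) :
    S.singularValues i ≤ T.singularValues i := by
  obtain hi | hi := le_or_gt (finrank 𝕜 E) i
  · rw [S.singularValues_of_finrank_le hi]
    exact T.singularValues_nonneg i
  · have hi' : i < finrank 𝕜 F :=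
      hi.trans_le (LinearMap.finrank_le_finrank_of_injective (f := J.toLinearMap) J.injective)
    rw [S.singularValues_of_lt rfl hi, T.singularValues_of_lt rfl hi']
    refine Real.sqrt_le_sqrt (eigenvalues_le_eigenvalues_of_re_inner_le _ _ rfl rfl J ?_ le_rfl)
    intro x
    simp only [LinearMap.comp_apply, LinearMap.adjoint_inner_left, inner_self_eq_norm_sq]
    gcongr
    exact hJ x

variable {𝕜 m m' n n' : Type*} [RCLike 𝕜] [Fintype n] [Fintype n']

variable (𝕜) in
/-- Extension of vectors by zero along an injection of index sets, as an isometry of Euclidean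
spaces. It compares a matrix with its submatrices. -/
noncomputable def extendByZeroIsometry (e : n' ↪ n) :
    EuclideanSpace 𝕜 n' →ₗᵢ[𝕜] EuclideanSpace 𝕜 n where
  toLinearMap := (WithLp.linearEquiv 2 𝕜 (n → 𝕜)).symm.toLinearMap ∘ₗ
    Function.ExtendByZero.linearMap 𝕜 e ∘ₗ (WithLp.linearEquiv 2 𝕜 (n' → 𝕜)).toLinearMap
  norm_map' x := by
    rw [EuclideanSpace.norm_eq, EuclideanSpace.norm_eq]
    congr 1
    symm
    refine Fintype.sum_of_injective e e.injective _ _ (fun j hj => ?_) (fun i => ?_)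
    · simp [Function.extend_apply' _ _ _ hj]
    · simp [e.injective.extend_apply]

theorem toEuclideanLin_extendByZeroIsometry_apply [DecidableEq n] [DecidableEq n']
    (A : Matrix m n 𝕜) (f : m' → m) (e : n' ↪ n) (x : EuclideanSpace 𝕜 n') (i : m') :
    A.toEuclideanLin (extendByZeroIsometry 𝕜 e x) (f i) =
      (A.submatrix f e).toEuclideanLin x i := by
  symm
  refine Fintype.sum_of_injective e e.injective _ _ (fun j hj => ?_) (fun k => ?_)
  · simp [extendByZeroIsometry, Function.extend_apply' _ _ _ hj]
  · simp [extendByZeroIsometry, e.injective.extend_apply]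

theorem eigenvalues₀_eq_singularValues_sq [Fintype m] [DecidableEq n] {A : Matrix n n 𝕜}
    (hA : A.IsHermitian) {B : Matrix m n 𝕜} (hAB : A = Bᴴ * B) (i : Fin (Fintype.card n)) :
    hA.eigenvalues₀ i = B.toEuclideanLin.singularValues i ^ 2 := by
  have hgram : A.toEuclideanLin = B.toEuclideanLin.adjoint ∘ₗ B.toEuclideanLin := by
    classical
    rw [hAB, ← toEuclideanLin_conjTranspose_eq_adjoint]
    exact toLpLin_mul 2 2 2 Bᴴ B
  rw [B.toEuclideanLin.sq_singularValues_fin finrank_euclideanSpace]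
  simp only [IsHermitian.eigenvalues₀, hgram]

theorem singularValues_submatrix_le [Fintype m] [Fintype m'] [DecidableEq n] [DecidableEq n']
    (A : Matrix m n 𝕜) (f : m' ↪ m) (e : n' ↪ n) (i : ℕ) :
    (A.submatrix f e).toEuclideanLin.singularValues i ≤ A.toEuclideanLin.singularValues i := by
  refine singularValues_le_singularValues_of_norm_le (extendByZeroIsometry 𝕜 e) (fun x => ?_) i
  rw [EuclideanSpace.norm_eq, EuclideanSpace.norm_eq]
  simp only [← toEuclideanLin_extendByZeroIsometry_apply]
  gcongr
  rw [← Finset.sum_map Finset.univ f fun k =>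
    ‖A.toEuclideanLin (extendByZeroIsometry 𝕜 e x) k‖ ^ 2]
  exact Finset.sum_le_univ_sum_of_nonneg fun _ => by positivity

end SingularValues

section SortedEigenvalues

variable {α : Type} {β : Type*} [Fintype α] [DecidableEq α] [Fintype β]

theorem sortedEigs_eq_ofFn {M : Matrix α α ℝ} (hM : M.IsHermitian) :
    sortedEigs M = List.ofFn fun j => hM.eigenvalues₀ j.rev := by
  have hsorted : (List.ofFn fun j => hM.eigenvalues₀ j.rev).Pairwise (· ≤ ·) :=
    List.pairwise_ofFn.mpr fun i j hij => hM.eigenvalues₀_antitone (Fin.rev_le_rev.mpr hij.le)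
  have hperm : Finset.univ.val.map hM.eigenvalues =
      Finset.univ.val.map fun j : Fin (Fintype.card α) => hM.eigenvalues₀ j.rev := by
    let e : Fin (Fintype.card α) ≃ α := Fintype.equivOfCardEq (Fintype.card_fin _)
    rw [← Multiset.map_univ_val_equiv (Fin.revPerm.trans e), Multiset.map_map]
    simp [IsHermitian.eigenvalues, Function.comp_def, e]
  rw [sortedEigs, dif_pos hM, hperm, Fin.univ_val_map, Multiset.coe_sort]
  exact List.mergeSort_of_pairwise (by simpa using hsorted)

theorem sortedEigs_transpose_mul_self (A : Matrix β α ℝ) :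
    sortedEigs (Aᵀ * A) =
      List.ofFn fun j : Fin (Fintype.card α) => A.toEuclideanLin.singularValues j.rev ^ 2 := by
  have hherm : (Aᵀ * A).IsHermitian := by
    simpa using isHermitian_conjTranspose_mul_self A
  simp only [sortedEigs_eq_ofFn hherm, eigenvalues₀_eq_singularValues_sq hherm (B := A) (by simp)]

theorem sortedEigs_transpose_mul_self_getD (A : Matrix β α ℝ) {k : ℕ} (hk : k < Fintype.card α) :
    (sortedEigs (Aᵀ * A)).getD k 0 =
      A.toEuclideanLin.singularValues (Fintype.card α - (k + 1)) ^ 2 := by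
  simp [sortedEigs_transpose_mul_self, hk]

theorem sortedEigs_transpose_mul_self_getD_nonneg (A : Matrix β α ℝ) (k : ℕ) :
    0 ≤ (sortedEigs (Aᵀ * A)).getD k 0 := by
  obtain hk | hk := lt_or_ge k (Fintype.card α)
  · rw [sortedEigs_transpose_mul_self_getD A hk]
    positivity
  · simp [sortedEigs_transpose_mul_self, hk]

theorem padGet_le_getD {l l' : List ℝ} {n : ℕ} (hl' : ∀ k, 0 ≤ l'.getD k 0)
    (hle : ∀ k < l.length, l.getD k 0 ≤ l'.getD (k + (n - l.length)) 0) (k : ℕ) :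
    padGet l n k ≤ l'.getD k 0 := by
  rw [padGet]
  split_ifs with hpad
  · exact hl' k
  obtain hk | hk := lt_or_ge (k - (n - l.length)) l.length
  · simpa [Nat.sub_add_cancel (not_lt.mp hpad)] using hle _ hk
  · rw [List.getD_eq_default _ _ hk]
    exact hl' k

end SortedEigenvalues

section HodgeLaplacian

theorem hodge_eq_transpose_mul_self (A : Finset (Finset ℕ)) :
    hodge A = (dirac A)ᵀ * dirac A := by
  simp [hodge, dirac, add_comm]

theorem length_sortedEigs_hodge (A : Finset (Finset ℕ)) :
    (sortedEigs (hodge A)).length = A.card := by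
  simp [hodge_eq_transpose_mul_self, sortedEigs_transpose_mul_self]

theorem sortedEigs_hodge_getD_nonneg (A : Finset (Finset ℕ)) (k : ℕ) :
    0 ≤ (sortedEigs (hodge A)).getD k 0 := by
  rw [hodge_eq_transpose_mul_self]
  exact sortedEigs_transpose_mul_self_getD_nonneg _ k

theorem sortedEigs_hodge_getD_le {G K : Finset (Finset ℕ)} (hKG : K ⊆ G) {k : ℕ}
    (hk : k < K.card) :
    (sortedEigs (hodge K)).getD k 0 ≤
      (sortedEigs (hodge G)).getD (k + (G.card - K.card)) 0 := by
  have hcard : K.card ≤ G.card := Finset.card_le_card hKG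
  let e : K ↪ G := Set.embeddingOfSubset _ _ hKG
  have hsub : dirac K = (dirac G).submatrix e e := rfl
  have hindex : G.card - (k + (G.card - K.card) + 1) = K.card - (k + 1) := by omega
  rw [hodge_eq_transpose_mul_self, hodge_eq_transpose_mul_self,
    sortedEigs_transpose_mul_self_getD _ (by simpa using hk),
    sortedEigs_transpose_mul_self_getD _ (by rw [Fintype.card_coe]; omega),
    Fintype.card_coe, Fintype.card_coe, hindex, hsub]
  gcongr
  · exact LinearMap.singularValues_nonneg _ _
  · exact singularValues_submatrix_le _ e e _

end HodgeLaplacian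

theorem spectral_monotonicity_subcomplex_general {G K : Finset (Finset ℕ)} (hKG : K ⊆ G) :
    (∀ k : ℕ, 1 ≤ k → k ≤ K.card →
      (sortedEigs (hodge K)).getD (k - 1) 0 ≤
        (sortedEigs (hodge G)).getD (k + G.card - K.card - 1) 0) ∧
    (∀ k : ℕ, 1 ≤ k → k ≤ G.card →
      padGet (sortedEigs (hodge K)) G.card (k - 1) ≤
        (sortedEigs (hodge G)).getD (k - 1) 0) := by
  have hcard : K.card ≤ G.card := Finset.card_le_card hKG
  constructor
  · intro k hk₁ hkm
    have hindex : k + G.card - K.card - 1 = k - 1 + (G.card - K.card) := by omega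
    rw [hindex]
    exact sortedEigs_hodge_getD_le hKG (by omega)
  · intro k _ _
    refine padGet_le_getD (sortedEigs_hodge_getD_nonneg G) (fun j hj => ?_) (k - 1)
    rw [length_sortedEigs_hodge] at hj ⊢
    exact sortedEigs_hodge_getD_le hKG hj

/-- **Spectral monotonicity for subcomplexes.** If K ⊆ G is a subcomplex with m elements
of a complex G with n elements, then λ_k(L_K) ≤ λ_{k+n-m}(L_G) for 1 ≤ k ≤ m;
equivalently, after left-padding the ascending spectrum of L_K with n-m zeros,
λ_k(L_K) ≤ λ_k(L_G) for all 1 ≤ k ≤ n. -/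
theorem spectral_monotonicity_subcomplex (G K : Finset (Finset ℕ)) (hG : IsComplex G)
    (hKG : K ⊆ G) (hK : IsSubcomplex K) :
    (∀ k : ℕ, 1 ≤ k → k ≤ K.card →
      (sortedEigs (hodge K)).getD (k - 1) 0 ≤
        (sortedEigs (hodge G)).getD (k + G.card - K.card - 1) 0) ∧
    (∀ k : ℕ, 1 ≤ k → k ≤ G.card →
      padGet (sortedEigs (hodge K)) G.card (k - 1) ≤
        (sortedEigs (hodge G)).getD (k - 1) 0) :=
  spectral_monotonicity_subcomplex_general hKG
end

section
/- Spectral monotonicity for open sets: Let G be a finite abstract simplicial complex with n elements, K ⊆ G a subcomplex, and U = G \ K the open complement with m elements. Then for every k with 1 ≤ k ≤ m, the k-th smallest eigenvalue of L_U is at most the (k + n − m)-th smallest eigenvalue of L_G; equivalently, after left-padding the ascending eigenvalue list of L_U with n − m zeros, λ_k(L_U) ≤ λ_k(L_G) for all 1 ≤ k ≤ n. -/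
open Matrix

/-!
The Laplacian `L_A = D_A²` has as eigenvalues the squares of the singular values of the symmetric
matrix `D_A`, and `D_U` is the submatrix of `D_G` on the rows and columns in `U`. Deleting columns
restricts `D_G` to a subspace and deleting rows projects its image, so `‖D_U x‖ ≤ ‖D_G (J x)‖` for
the extension by zero `J`. By the Courant–Fischer principle (`σᵢ(T) ≤ c` exactly when
`‖T x‖ ≤ c ‖x‖` on a subspace of codimension at most `i`) no singular value increases. Singular
values are listed in descending order, where padding the shorter list with zeros *on the right*
corresponds to the left padding of the ascending eigenvalue lists.
-/

section LinearAlgebra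

open Module

variable {K V W : Type*} [DivisionRing K] [AddCommGroup V] [Module K V]
  [AddCommGroup W] [Module K W]

theorem finrank_quotient_comap_le (f : V →ₗ[K] W) (P : Submodule K W)
    [Module.Finite K (W ⧸ P)] : finrank K (V ⧸ P.comap f) ≤ finrank K (W ⧸ P) := by
  refine LinearMap.finrank_le_finrank_of_injective (f := (P.comap f).mapQ P f le_rfl) ?_
  rw [← LinearMap.ker_eq_bot, Submodule.ker_mapQ, Submodule.mkQ_map_self]

theorem exists_mem_inf_ne_zero_of_finrank_quotient_add_lt [Module.Finite K V]
    {P Q : Submodule K V} (h : finrank K (V ⧸ P) + finrank K (V ⧸ Q) < finrank K V) :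
    ∃ x ∈ P ⊓ Q, x ≠ 0 := by
  refine Submodule.exists_mem_ne_zero_of_ne_bot fun hPQ ↦ ?_
  have hP := P.finrank_quotient_add_finrank
  have hQ := Q.finrank_quotient_add_finrank
  have hsup := Submodule.finrank_sup_add_finrank_inf_eq P Q
  have hle := (P ⊔ Q).finrank_le
  rw [hPQ, finrank_bot] at hsup
  lia

end LinearAlgebra

section OrthogonalComplement

open Module InnerProductSpace

variable {𝕜 E ι : Type*} [RCLike 𝕜] [NormedAddCommGroup E] [InnerProductSpace 𝕜 E]

theorem inner_eq_zero_of_mem_orthogonal_span_image {v : ι → E} {s : Set ι} {x : E}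
    (hx : x ∈ (Submodule.span 𝕜 (v '' s))ᗮ) {j : ι} (hj : j ∈ s) : ⟪v j, x⟫_𝕜 = 0 :=
  hx _ (Submodule.subset_span (Set.mem_image_of_mem v hj))

theorem finrank_quotient_orthogonal_span_image_le (v : ι → E) (s : Finset ι) :
    finrank 𝕜 (E ⧸ (Submodule.span 𝕜 (v '' s))ᗮ) ≤ s.card := by
  classical
  rw [← Finset.coe_image]
  calc finrank 𝕜 (E ⧸ (Submodule.span 𝕜 (s.image v : Set E))ᗮ)
      = finrank 𝕜 (Submodule.span 𝕜 (s.image v : Set E)) :=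
        (Submodule.quotientEquivOfIsCompl _ _
          (Submodule.isCompl_orthogonal _).symm).finrank_eq
    _ ≤ (s.image v).card := finrank_span_finset_le_card _
    _ ≤ s.card := Finset.card_image_le

end OrthogonalComplement

section SingularValues

open Module InnerProductSpace

variable {𝕜 E F E₂ F₂ : Type*} [RCLike 𝕜]
  [NormedAddCommGroup E] [InnerProductSpace 𝕜 E] [FiniteDimensional 𝕜 E]
  [NormedAddCommGroup F] [InnerProductSpace 𝕜 F] [FiniteDimensional 𝕜 F]
  [NormedAddCommGroup E₂] [InnerProductSpace 𝕜 E₂] [FiniteDimensional 𝕜 E₂]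
  [NormedAddCommGroup F₂] [InnerProductSpace 𝕜 F₂] [FiniteDimensional 𝕜 F₂]

/-- An orthonormal basis of right singular vectors of `T`: eigenvectors of `T* T`, ordered so that
the `i`-th one belongs to the singular value `T.singularValues i`. -/
noncomputable def rightSingularBasis (T : E →ₗ[𝕜] F) :
    OrthonormalBasis (Fin (finrank 𝕜 E)) 𝕜 E :=
  T.isSymmetric_adjoint_comp_self.eigenvectorBasis rfl

theorem adjoint_comp_self_apply_rightSingularBasis (T : E →ₗ[𝕜] F) (i : Fin (finrank 𝕜 E)) :
    (T.adjoint ∘ₗ T) (rightSingularBasis T i) =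
      ((T.singularValues i ^ 2 : ℝ) : 𝕜) • rightSingularBasis T i := by
  rw [T.sq_singularValues_fin rfl, rightSingularBasis, LinearMap.IsSymmetric.apply_eigenvectorBasis]

theorem norm_sq_apply_eq_sum_singularValues (T : E →ₗ[𝕜] F) (x : E) :
    ‖T x‖ ^ 2 = ∑ i : Fin (finrank 𝕜 E),
      T.singularValues i ^ 2 * ‖⟪rightSingularBasis T i, x⟫_𝕜‖ ^ 2 := by
  have hcoord (i) : ⟪(T.adjoint ∘ₗ T) x, rightSingularBasis T i⟫_𝕜 =
      ((T.singularValues i ^ 2 : ℝ) : 𝕜) * ⟪x, rightSingularBasis T i⟫_𝕜 := by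
    rw [T.isSymmetric_adjoint_comp_self, adjoint_comp_self_apply_rightSingularBasis,
      inner_smul_right]
  have hinner : ((‖T x‖ ^ 2 : ℝ) : 𝕜) = ⟪(T.adjoint ∘ₗ T) x, x⟫_𝕜 := by
    rw [LinearMap.comp_apply, LinearMap.adjoint_inner_left, inner_self_eq_norm_sq_to_K]
    norm_cast
  apply RCLike.ofReal_injective (K := 𝕜)
  rw [hinner, ← (rightSingularBasis T).sum_inner_mul_inner]
  simp only [hcoord, map_sum, mul_assoc, ← inner_conj_symm x, RCLike.conj_mul]
  push_cast
  rfl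

theorem norm_apply_le_of_inner_rightSingularBasis_eq_zero (T : E →ₗ[𝕜] F) {i : ℕ} {x : E}
    (hx : ∀ j : Fin (finrank 𝕜 E), j < i → ⟪rightSingularBasis T j, x⟫_𝕜 = 0) :
    ‖T x‖ ≤ T.singularValues i * ‖x‖ := by
  refine le_of_sq_le_sq ?_ (mul_nonneg (T.singularValues_nonneg i) (norm_nonneg x))
  rw [mul_pow, norm_sq_apply_eq_sum_singularValues,
    ← (rightSingularBasis T).sum_sq_norm_inner_right x, Finset.mul_sum]
  refine Finset.sum_le_sum fun j _ ↦ ?_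
  rcases lt_or_ge (j : ℕ) i with hj | hj
  · simp [hx j hj]
  · have := T.singularValues_nonneg j
    gcongr
    exact T.singularValues_antitone hj

theorem singularValues_mul_norm_le_of_inner_rightSingularBasis_eq_zero (T : E →ₗ[𝕜] F) {i : ℕ}
    {x : E} (hx : ∀ j : Fin (finrank 𝕜 E), i < j → ⟪rightSingularBasis T j, x⟫_𝕜 = 0) :
    T.singularValues i * ‖x‖ ≤ ‖T x‖ := by
  refine le_of_sq_le_sq ?_ (norm_nonneg _)
  rw [mul_pow, norm_sq_apply_eq_sum_singularValues,
    ← (rightSingularBasis T).sum_sq_norm_inner_right x, Finset.mul_sum]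
  refine Finset.sum_le_sum fun j _ ↦ ?_
  rcases lt_or_ge i (j : ℕ) with hj | hj
  · simp [hx j hj]
  · have := T.singularValues_nonneg i
    gcongr
    exact T.singularValues_antitone hj

theorem singularValues_le_iff_exists_finrank_quotient_le (T : E →ₗ[𝕜] F) (i : ℕ) {c : ℝ}
    (hc : 0 ≤ c) :
    T.singularValues i ≤ c ↔
      ∃ V : Submodule 𝕜 E, finrank 𝕜 (E ⧸ V) ≤ i ∧ ∀ x ∈ V, ‖T x‖ ≤ c * ‖x‖ := by
  constructor
  · intro hic
    let s : Finset (Fin (finrank 𝕜 E)) := {j | j < i}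
    have hs : s.card ≤ i := Fin.card_filter_val_lt.trans_le (min_le_right _ _)
    refine ⟨(Submodule.span 𝕜 (rightSingularBasis T '' s))ᗮ,
      (finrank_quotient_orthogonal_span_image_le _ s).trans hs, fun x hx ↦ ?_⟩
    calc ‖T x‖ ≤ T.singularValues i * ‖x‖ :=
          norm_apply_le_of_inner_rightSingularBasis_eq_zero T fun j hj ↦
            inner_eq_zero_of_mem_orthogonal_span_image hx (by simpa [s] using hj)
      _ ≤ c * ‖x‖ := by gcongr
  · rintro ⟨V, hVi, hV⟩
    by_contra! hci
    have hi : i < finrank 𝕜 E := by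
      by_contra! hi
      exact (hc.trans_lt hci).ne' (T.singularValues_of_finrank_le hi)
    -- `V` is too large to avoid the span of the first `i + 1` right singular vectors.
    let s : Finset (Fin (finrank 𝕜 E)) := Finset.Ioi ⟨i, hi⟩
    have hs : s.card = finrank 𝕜 E - 1 - i := Fin.card_Ioi _
    have hW := finrank_quotient_orthogonal_span_image_le (𝕜 := 𝕜) (rightSingularBasis T) s
    obtain ⟨x, ⟨hxV, hxW⟩, hx0⟩ :=
      exists_mem_inf_ne_zero_of_finrank_quotient_add_lt (K := 𝕜) (P := V)
        (Q := (Submodule.span 𝕜 (rightSingularBasis T '' s))ᗮ) (by lia)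
    have hge : T.singularValues i * ‖x‖ ≤ ‖T x‖ :=
      singularValues_mul_norm_le_of_inner_rightSingularBasis_eq_zero T fun j hj ↦
        inner_eq_zero_of_mem_orthogonal_span_image hxW (by simpa [s, Fin.lt_def] using hj)
    exact hci.not_ge (le_of_mul_le_mul_right (hge.trans (hV x hxV)) (norm_pos_iff.2 hx0))

theorem singularValues_le_of_norm_apply_le {S : E →ₗ[𝕜] F} {T : E₂ →ₗ[𝕜] F₂} {J : E →ₗ[𝕜] E₂}
    (hJ : ∀ x, ‖J x‖ ≤ ‖x‖) (hST : ∀ x, ‖S x‖ ≤ ‖T (J x)‖) (i : ℕ) :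
    S.singularValues i ≤ T.singularValues i := by
  obtain ⟨V, hVi, hV⟩ :=
    (singularValues_le_iff_exists_finrank_quotient_le T i (T.singularValues_nonneg i)).1 le_rfl
  refine (singularValues_le_iff_exists_finrank_quotient_le S i (T.singularValues_nonneg i)).2
    ⟨V.comap J, (finrank_quotient_comap_le J V).trans hVi, fun x hx ↦ ?_⟩
  calc ‖S x‖ ≤ ‖T (J x)‖ := hST x
    _ ≤ T.singularValues i * ‖J x‖ := hV _ hx
    _ ≤ T.singularValues i * ‖x‖ := by gcongr; exacts [T.singularValues_nonneg i, hJ x]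

end SingularValues

section ExtendByZero

variable {V m n p q : Type*} [Fintype n] [Fintype q]

theorem norm_toLp_comp_le [SeminormedAddCommGroup V] {c : q → n} (hc : Function.Injective c)
    (y : n → V) : ‖WithLp.toLp 2 (y ∘ c)‖ ≤ ‖WithLp.toLp 2 y‖ := by
  refine le_of_sq_le_sq ?_ (norm_nonneg _)
  simp only [PiLp.norm_sq_eq_of_L2, Function.comp_apply]
  calc ∑ j, ‖y (c j)‖ ^ 2 = ∑ i ∈ Finset.univ.map ⟨c, hc⟩, ‖y i‖ ^ 2 :=
        (Finset.sum_map _ ⟨c, hc⟩ fun i ↦ ‖y i‖ ^ 2).symm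
    _ ≤ ∑ i, ‖y i‖ ^ 2 := Finset.sum_le_univ_sum_of_nonneg fun i ↦ sq_nonneg _

theorem norm_toLp_extend_zero [SeminormedAddCommGroup V] {c : q → n} (hc : Function.Injective c)
    (x : q → V) : ‖WithLp.toLp 2 (Function.extend c x 0)‖ = ‖WithLp.toLp 2 x‖ := by
  refine (sq_eq_sq₀ (norm_nonneg _) (norm_nonneg _)).1 ?_
  simp only [PiLp.norm_sq_eq_of_L2]
  refine (Fintype.sum_of_injective c hc _ _ (fun i hi ↦ ?_) fun j ↦ ?_).symm
  · simp [Function.extend_apply' x (0 : n → V) i hi]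
  · rw [hc.extend_apply]

theorem submatrix_mulVec_eq_comp [NonUnitalNonAssocSemiring V] (M : Matrix m n V) (r : p → m)
    {c : q → n} (hc : Function.Injective c) (x : q → V) :
    M.submatrix r c *ᵥ x = (M *ᵥ Function.extend c x 0) ∘ r := by
  funext i
  refine Fintype.sum_of_injective c hc _ _ (fun j hj ↦ ?_) fun j ↦ ?_
  · simp [Function.extend_apply' x (0 : n → V) j hj]
  · simp [hc.extend_apply]

end ExtendByZero

section Matrix

variable {𝕜 m n p q : Type*} [RCLike 𝕜] [Fintype m] [Fintype n] [Fintype p] [Fintype q]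
  [DecidableEq n] [DecidableEq q]

theorem singularValues_toEuclideanLin_submatrix_le (M : Matrix m n 𝕜) {r : p → m} {c : q → n}
    (hr : Function.Injective r) (hc : Function.Injective c) (i : ℕ) :
    (M.submatrix r c).toEuclideanLin.singularValues i ≤ M.toEuclideanLin.singularValues i := by
  let J : EuclideanSpace 𝕜 q →ₗ[𝕜] EuclideanSpace 𝕜 n :=
    (WithLp.linearEquiv 2 𝕜 (n → 𝕜)).symm.toLinearMap ∘ₗ Function.ExtendByZero.linearMap 𝕜 c ∘ₗ
      (WithLp.linearEquiv 2 𝕜 (q → 𝕜)).toLinearMap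
  refine singularValues_le_of_norm_apply_le (J := J)
    (fun x ↦ (norm_toLp_extend_zero hc x.ofLp).le) (fun x ↦ ?_) i
  rw [toLpLin_apply, submatrix_mulVec_eq_comp M r hc]
  exact norm_toLp_comp_le hr _

theorem sq_singularValues_toEuclideanLin (M : Matrix m n 𝕜)
    (i : Fin (Fintype.card n)) :
    M.toEuclideanLin.singularValues i ^ 2 =
      (isHermitian_conjTranspose_mul_self M).eigenvalues₀ i := by
  classical
  rw [M.toEuclideanLin.sq_singularValues_fin finrank_euclideanSpace, IsHermitian.eigenvalues₀]
  congr 1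
  exact (congrArg (· ∘ₗ M.toEuclideanLin) M.toEuclideanLin_conjTranspose_eq_adjoint.symm).trans
    (toLpLin_mul 2 2 2 Mᴴ M).symm

end Matrix

section SortedEigs

variable {m n : Type} [Fintype m] [Fintype n] [DecidableEq n]

theorem sortedEigs_eq_reverse_ofFn {A : Matrix n n ℝ} (hA : A.IsHermitian) :
    sortedEigs A = (List.ofFn hA.eigenvalues₀).reverse := by
  have hroots : Finset.univ.val.map hA.eigenvalues = List.ofFn hA.eigenvalues₀ := by
    rw [← Fin.univ_val_map]
    exact hA.roots_charpoly_eq_eigenvalues.symm.trans hA.roots_charpoly_eq_eigenvalues₀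
  rw [sortedEigs, dif_pos hA]
  refine List.Perm.eq_reverse_of_sortedLE_of_sortedGE ?_ ?_ hA.eigenvalues₀_antitone.sortedGE_ofFn
  · rw [← Multiset.coe_eq_coe, Multiset.sort_eq, hroots]
  · exact (Multiset.pairwise_sort _ _).sortedLE

theorem length_sortedEigs {A : Matrix n n ℝ} (hA : A.IsHermitian) :
    (sortedEigs A).length = Fintype.card n := by
  rw [sortedEigs_eq_reverse_ofFn hA, List.length_reverse, List.length_ofFn]

theorem getD_sortedEigs_conjTranspose_mul_self (M : Matrix m n ℝ) {k : ℕ}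
    (hk : k < Fintype.card n) :
    (sortedEigs (Mᴴ * M)).getD k 0 =
      M.toEuclideanLin.singularValues (Fintype.card n - 1 - k) ^ 2 := by
  have hM := isHermitian_conjTranspose_mul_self M
  have hlt : Fintype.card n - 1 - k < Fintype.card n := by lia
  rw [sortedEigs_eq_reverse_ofFn hM, List.getD_reverse _ (by simpa using hk), List.length_ofFn,
    List.getD_eq_getElem _ _ (by simpa using hlt), List.getElem_ofFn]
  exact (sq_singularValues_toEuclideanLin M ⟨_, hlt⟩).symm

theorem padGet_sortedEigs_conjTranspose_mul_self (M : Matrix m n ℝ) {N k : ℕ}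
    (hN : Fintype.card n ≤ N) (hk : k < N) :
    padGet (sortedEigs (Mᴴ * M)) N k = M.toEuclideanLin.singularValues (N - 1 - k) ^ 2 := by
  rw [padGet, length_sortedEigs (isHermitian_conjTranspose_mul_self M)]
  split_ifs with hpad
  · rw [LinearMap.singularValues_of_finrank_le _ (by rw [finrank_euclideanSpace]; lia),
      zero_pow two_ne_zero]
  · rw [getD_sortedEigs_conjTranspose_mul_self M (by lia)]
    congr 2
    lia

end SortedEigs

section Dirac

theorem hodge_eq_conjTranspose_mul_self (A : Finset (Finset ℕ)) :
    hodge A = (dirac A)ᴴ * dirac A := by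
  rw [hodge, dirac, conjTranspose_eq_transpose_of_trivial, transpose_add, transpose_transpose,
    add_comm (extDer A)ᵀ]

theorem dirac_eq_submatrix {U G : Finset (Finset ℕ)} (hUG : U ⊆ G) :
    dirac U = (dirac G).submatrix (Subtype.map id hUG) (Subtype.map id hUG) :=
  rfl

theorem singularValues_dirac_le {U G : Finset (Finset ℕ)} (hUG : U ⊆ G) (i : ℕ) :
    (dirac U).toEuclideanLin.singularValues i ≤ (dirac G).toEuclideanLin.singularValues i := by
  have hinj : Function.Injective (Subtype.map id hUG) :=
    Subtype.map_injective hUG Function.injective_id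
  rw [dirac_eq_submatrix hUG]
  exact singularValues_toEuclideanLin_submatrix_le _ hinj hinj i

end Dirac

theorem spectral_monotonicity_open_general {U G : Finset (Finset ℕ)} (hUG : U ⊆ G) :
    (∀ k : ℕ, 1 ≤ k → k ≤ U.card →
      (sortedEigs (hodge U)).getD (k - 1) 0 ≤
        (sortedEigs (hodge G)).getD (k + G.card - U.card - 1) 0) ∧
    (∀ k : ℕ, 1 ≤ k → k ≤ G.card →
      padGet (sortedEigs (hodge U)) G.card (k - 1) ≤
        (sortedEigs (hodge G)).getD (k - 1) 0) := by
  have hcard := Finset.card_le_card hUG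
  have hsq (i : ℕ) : (dirac U).toEuclideanLin.singularValues i ^ 2 ≤
      (dirac G).toEuclideanLin.singularValues i ^ 2 :=
    pow_le_pow_left₀ (LinearMap.singularValues_nonneg _ i) (singularValues_dirac_le hUG i) 2
  simp only [hodge_eq_conjTranspose_mul_self]
  refine ⟨fun k hk1 hkU ↦ ?_, fun k hk1 hkG ↦ ?_⟩
  · have hindex : U.card - 1 - (k - 1) = G.card - 1 - (k + G.card - U.card - 1) := by lia
    rw [getD_sortedEigs_conjTranspose_mul_self _ (by rw [Fintype.card_coe]; lia),
      getD_sortedEigs_conjTranspose_mul_self _ (by rw [Fintype.card_coe]; lia),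
      Fintype.card_coe, Fintype.card_coe, hindex]
    exact hsq _
  · rw [padGet_sortedEigs_conjTranspose_mul_self _ (by rwa [Fintype.card_coe]) (by lia),
      getD_sortedEigs_conjTranspose_mul_self _ (by rw [Fintype.card_coe]; lia), Fintype.card_coe]
    exact hsq _

/-- **Spectral monotonicity for open sets.** If K ⊆ G is a subcomplex of a complex G
with n elements and U = G \ K has m elements, then λ_k(L_U) ≤ λ_{k+n-m}(L_G) for
1 ≤ k ≤ m; equivalently, after left-padding the ascending spectrum of L_U with n-m
zeros, λ_k(L_U) ≤ λ_k(L_G) for all 1 ≤ k ≤ n. -/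
theorem spectral_monotonicity_open (G K : Finset (Finset ℕ)) (hG : IsComplex G)
    (hKG : K ⊆ G) (hK : IsSubcomplex K) :
    (∀ k : ℕ, 1 ≤ k → k ≤ (G \ K).card →
      (sortedEigs (hodge (G \ K))).getD (k - 1) 0 ≤
        (sortedEigs (hodge G)).getD (k + G.card - (G \ K).card - 1) 0) ∧
    (∀ k : ℕ, 1 ≤ k → k ≤ G.card →
      padGet (sortedEigs (hodge (G \ K))) G.card (k - 1) ≤
        (sortedEigs (hodge G)).getD (k - 1) 0) :=
  spectral_monotonicity_open_general Finset.sdiff_subset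
end

section
/- For finite nonnegative sequences x, y, u, v: if x ≤ y and u ≤ v in the left-padded entrywise order, then x ⊕ u ≤ y ⊕ v. -/
/-- The left-padded entrywise order on finite ascending sequences. -/
def seqLE (x y : List ℝ) : Prop :=
  ∀ k < max x.length y.length,
    padGet x (max x.length y.length) k ≤ padGet y (max x.length y.length) k

/-- The entrywise sum of the left-padded versions of two ascending sequences. -/
noncomputable def seqAdd (x y : List ℝ) : List ℝ :=
  (List.range (max x.length y.length)).map
    (fun k => padGet x (max x.length y.length) k + padGet y (max x.length y.length) k)

/-- x ⊕ y : the ascending sequence formed by the multiset union of x and y. -/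
noncomputable def seqMerge (x y : List ℝ) : List ℝ :=
  Multiset.sort (↑(x ++ y)) (· ≤ ·)

/-!
The idea is to replace an ascending sequence by its counting function `t ↦ #{entries ≥ t}`.
Entrywise domination forces domination of counting functions, whatever the order of the entries.
Conversely, the `m`-th largest entry is at least `t` exactly when at least `m` entries are, so for
ascending sequences domination of counting functions gives back entrywise domination. Padding by
zeros does not affect the counts at thresholds `t > 0`, and these suffice to recover `x ≤ y` when
`y` is nonnegative. Under `⊕` counting functions simply add.
-/

theorem le_getElem_iff_le_countP {α : Type*} [LinearOrder α] {l : List α}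
    (hl : l.Pairwise (· ≤ ·)) (t : α) {i : ℕ} (hi : i < l.length) :
    t ≤ l[i] ↔ l.length - i ≤ l.countP (t ≤ ·) := by
  constructor
  · intro hti
    have hdrop : ∀ a ∈ l.drop i, t ≤ a := by
      intro a ha
      obtain ⟨j, hj, rfl⟩ := List.mem_drop_iff_getElem.1 ha
      exact hti.trans (hl.sortedLE.getElem_le_getElem_of_le (by omega))
    calc l.length - i = (l.drop i).length := List.length_drop.symm
      _ = (l.drop i).countP (t ≤ ·) :=
        (List.countP_eq_length.2 fun a ha => decide_eq_true (hdrop a ha)).symm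
      _ ≤ l.countP (t ≤ ·) := (List.drop_sublist i l).countP_le
  · contrapose!
    intro hit
    have htake : ∀ a ∈ l.take (i + 1), ¬ t ≤ a := by
      intro a ha
      obtain ⟨j, hj, rfl⟩ := List.mem_take_iff_getElem.1 ha
      have hji : l[j] ≤ l[i] := hl.sortedLE.getElem_le_getElem_of_le (by omega)
      exact (hji.trans_lt hit).not_ge
    calc l.countP (t ≤ ·)
        = (l.take (i + 1)).countP (t ≤ ·) + (l.drop (i + 1)).countP (t ≤ ·) := by
          rw [← List.countP_append, List.take_append_drop]
      _ = (l.drop (i + 1)).countP (t ≤ ·) := by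
          rw [List.countP_eq_zero.2 fun a ha => by simpa using htake a ha, zero_add]
      _ ≤ (l.drop (i + 1)).length := List.countP_le_length
      _ < l.length - i := by rw [List.length_drop]; omega

theorem countP_leftpad_of_neg {α : Type*} {p : α → Bool} {a : α} (ha : ¬ p a) (l : List α)
    (n : ℕ) : (l.leftpad n a).countP p = l.countP p := by
  rw [List.leftpad, List.countP_append, List.countP_replicate, if_neg ha, zero_add]

theorem padGet_of_lt {l : List ℝ} {n k : ℕ} (hk : k < n - l.length) : padGet l n k = 0 :=
  if_pos hk

theorem padGet_of_le {l : List ℝ} {n k : ℕ} (hk : n - l.length ≤ k) :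
    padGet l n k = l.getD (k - (n - l.length)) 0 :=
  if_neg hk.not_gt

theorem padGet_nonneg {l : List ℝ} (hl : ∀ a ∈ l, 0 ≤ a) (n k : ℕ) : 0 ≤ padGet l n k := by
  rcases lt_or_ge k (n - l.length) with hpad | hpad
  · exact (padGet_of_lt hpad).ge
  · rw [padGet_of_le hpad]
    rcases lt_or_ge (k - (n - l.length)) l.length with hi | hi
    · exact List.getD_eq_getElem l 0 hi ▸ hl _ (List.getElem_mem hi)
    · exact (List.getD_eq_default l 0 hi).ge

theorem map_padGet_range {l : List ℝ} {n : ℕ} (hn : l.length ≤ n) :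
    (List.range n).map (padGet l n) = l.leftpad n 0 := by
  refine List.ext_getElem (by simp [hn]) fun k hk _ => ?_
  have hkn : k < n := by simpa using hk
  rcases lt_or_ge k (n - l.length) with hpad | hpad
  · simp [List.leftpad, hpad, padGet_of_lt hpad]
  · have hi : k - (n - l.length) < l.length := by omega
    simp [List.leftpad, List.getElem_append, hpad.not_gt, padGet_of_le hpad, hi]

theorem countP_padGet_range {l : List ℝ} {n : ℕ} (hn : l.length ≤ n) {t : ℝ} (ht : 0 < t) :
    (List.range n).countP (t ≤ padGet l n ·) = l.countP (t ≤ ·) := by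
  calc (List.range n).countP (t ≤ padGet l n ·)
      = ((List.range n).map (padGet l n)).countP (t ≤ ·) := by
        rw [List.countP_map, Function.comp_def]
    _ = (l.leftpad n 0).countP (t ≤ ·) := by rw [map_padGet_range hn]
    _ = l.countP (t ≤ ·) := countP_leftpad_of_neg (by simpa using ht) l n

theorem le_padGet_iff_le_countP {l : List ℝ} (hl : l.Pairwise (· ≤ ·)) {n k : ℕ}
    (hn : l.length ≤ n) (hk : k < n) {t : ℝ} (ht : 0 < t) :
    t ≤ padGet l n k ↔ n - k ≤ l.countP (t ≤ ·) := by
  rcases lt_or_ge k (n - l.length) with hpad | hpad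
  · have hcount : l.countP (t ≤ ·) ≤ l.length := List.countP_le_length
    rw [padGet_of_lt hpad]
    exact iff_of_false ht.not_ge (by omega)
  · have hi : k - (n - l.length) < l.length := by omega
    have hrank : l.length - (k - (n - l.length)) = n - k := by omega
    rw [padGet_of_le hpad, List.getD_eq_getElem _ _ hi, le_getElem_iff_le_countP hl t hi, hrank]

theorem countP_le_of_seqLE {x y : List ℝ} (hxy : seqLE x y) {t : ℝ} (ht : 0 < t) :
    x.countP (t ≤ ·) ≤ y.countP (t ≤ ·) := by
  rw [← countP_padGet_range (le_max_left x.length y.length) ht,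
    ← countP_padGet_range (le_max_right x.length y.length) ht]
  refine List.countP_mono_left fun k hk htx => ?_
  exact decide_eq_true ((of_decide_eq_true htx).trans (hxy k (List.mem_range.1 hk)))

theorem seqLE_of_countP_le {x y : List ℝ} (hx : x.Pairwise (· ≤ ·)) (hy : y.Pairwise (· ≤ ·))
    (hy0 : ∀ a ∈ y, 0 ≤ a) (hcount : ∀ t : ℝ, 0 < t → x.countP (t ≤ ·) ≤ y.countP (t ≤ ·)) :
    seqLE x y := by
  intro k hk
  rcases le_or_gt (padGet x (max x.length y.length) k) 0 with hnonpos | hpos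
  · exact hnonpos.trans (padGet_nonneg hy0 _ k)
  · rw [le_padGet_iff_le_countP hy (le_max_right _ _) hk hpos]
    have hxcount := (le_padGet_iff_le_countP hx (le_max_left _ _) hk hpos).1 le_rfl
    exact hxcount.trans (hcount _ hpos)

theorem seqMerge_perm_append (x y : List ℝ) : (seqMerge x y).Perm (x ++ y) :=
  Multiset.coe_eq_coe.1 (Multiset.sort_eq _ _)

theorem pairwise_seqMerge (x y : List ℝ) : (seqMerge x y).Pairwise (· ≤ ·) :=
  Multiset.pairwise_sort _ _

theorem mem_seqMerge {x y : List ℝ} {a : ℝ} : a ∈ seqMerge x y ↔ a ∈ x ∨ a ∈ y := by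
  rw [(seqMerge_perm_append x y).mem_iff, List.mem_append]

theorem countP_seqMerge (p : ℝ → Bool) (x y : List ℝ) :
    (seqMerge x y).countP p = x.countP p + y.countP p := by
  rw [(seqMerge_perm_append x y).countP_eq, List.countP_append]

theorem seqMerge_mono_general (x y u v : List ℝ)
    (hy0 : ∀ a ∈ y, 0 ≤ a) (hv0 : ∀ a ∈ v, 0 ≤ a)
    (hxy : seqLE x y) (huv : seqLE u v) :
    seqLE (seqMerge x u) (seqMerge y v) := by
  have hnonneg : ∀ a ∈ seqMerge y v, 0 ≤ a :=
    fun a ha => (mem_seqMerge.1 ha).elim (hy0 a) (hv0 a)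
  refine seqLE_of_countP_le (pairwise_seqMerge x u) (pairwise_seqMerge y v) hnonneg fun t ht => ?_
  rw [countP_seqMerge, countP_seqMerge]
  exact add_le_add (countP_le_of_seqLE hxy ht) (countP_le_of_seqLE huv ht)

/-- If x ≤ y and u ≤ v in the left-padded entrywise order on finite nonnegative
ascending sequences, then x ⊕ u ≤ y ⊕ v. -/
theorem seqMerge_mono (x y u v : List ℝ)
    (hx : x.Pairwise (· ≤ ·)) (hy : y.Pairwise (· ≤ ·))
    (hu : u.Pairwise (· ≤ ·)) (hv : v.Pairwise (· ≤ ·))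
    (hx0 : ∀ a ∈ x, 0 ≤ a) (hy0 : ∀ a ∈ y, 0 ≤ a)
    (hu0 : ∀ a ∈ u, 0 ≤ a) (hv0 : ∀ a ∈ v, 0 ≤ a)
    (hxy : seqLE x y) (huv : seqLE u v) :
    seqLE (seqMerge x u) (seqMerge y v) := by
  exact seqMerge_mono_general x y u v hy0 hv0 hxy huv
end

section
/- McKean–Singer symmetry: Let G be a finite abstract simplicial complex, K ⊆ G a subcomplex and U = G \ K (the case K = ∅, U = G is allowed). Then for every real t, the supertrace Σ_{x ∈ U} (−1)^{|x|−1} (exp(−t L_U))_{xx} is independent of t and equals the Euler characteristic Σ_{p≥0} (−1)^p f_p(U). -/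
open Matrix

/-- The number of p-simplices in a set of sets A. -/
def fvec (A : Finset (Finset ℕ)) (p : ℕ) : ℕ :=
  (A.filter fun x => x.card = p + 1).card

/-!
The parity operator `P` anticommutes with the Dirac matrix `D`, since `D` only connects simplices
whose dimensions differ by one. Cyclicity of the trace then gives `tr (P D X) = 0` for every `X`
commuting with `D`, so the derivative `-tr (P D² exp (-t D²))` of the supertrace of the heat kernel
vanishes. At `t = 0` the supertrace is `tr P`, the Euler characteristic.
-/

section Anticommuting

variable {n : Type*} [Fintype n]

theorem trace_mul_mul_eq_zero_of_semiconjBy_neg {R : Type*} [CommRing R] [IsAddTorsionFree R]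
    {P D X : Matrix n n R} (hP : SemiconjBy P D (-D)) (hX : Commute D X) :
    (P * (D * X)).trace = 0 := by
  refine self_eq_neg.mp ?_
  calc (P * (D * X)).trace = -(D * (P * X)).trace := by
        rw [← Matrix.mul_assoc, hP.eq, Matrix.neg_mul, Matrix.neg_mul, trace_neg, Matrix.mul_assoc]
    _ = -(P * (X * D)).trace := by rw [trace_mul_comm, Matrix.mul_assoc]
    _ = -(P * (D * X)).trace := by rw [hX.eq]

variable [DecidableEq n] {𝕜 : Type*} [RCLike 𝕜]

open scoped Matrix.Norms.Operator in
theorem hasDerivAt_trace_mul_exp_smul (P L : Matrix n n 𝕜) (t : 𝕜) :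
    HasDerivAt (fun s => (P * NormedSpace.exp (s • L)).trace)
      (P * (L * NormedSpace.exp (t • L))).trace t :=
  let traceMul := (traceLinearMap n 𝕜 𝕜 ∘ₗ LinearMap.mulLeft 𝕜 P).toContinuousLinearMap
  traceMul.hasFDerivAt.comp_hasDerivAt t (hasDerivAt_exp_smul_const' L t)

theorem trace_mul_exp_smul_sq_of_semiconjBy_neg {P D : Matrix n n 𝕜}
    (hP : SemiconjBy P D (-D)) (t : 𝕜) :
    (P * NormedSpace.exp (t • (D * D))).trace = P.trace := by
  have hasDerivAt_zero (s : 𝕜) :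
      HasDerivAt (fun r => (P * NormedSpace.exp (r • (D * D))).trace) 0 s := by
    have hcomm : Commute D (D * NormedSpace.exp (s • (D * D))) :=
      (Commute.refl D).mul_right
        (((Commute.refl D).mul_right (Commute.refl D)).smul_right s).exp_right
    simpa only [Matrix.mul_assoc, trace_mul_mul_eq_zero_of_semiconjBy_neg hP hcomm]
      using hasDerivAt_trace_mul_exp_smul P (D * D) s
  calc (P * NormedSpace.exp (t • (D * D))).trace
      = (P * NormedSpace.exp ((0 : 𝕜) • (D * D))).trace :=
        is_const_of_deriv_eq_zero (fun s => (hasDerivAt_zero s).differentiableAt)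
          (fun s => (hasDerivAt_zero s).deriv) t 0
    _ = P.trace := by rw [zero_smul, NormedSpace.exp_zero, Matrix.mul_one]

end Anticommuting

section Supertrace

theorem card_pos_of_empty_notMem {α : Type*} {S : Finset (Finset α)} (hS : ∅ ∉ S)
    {x : Finset α} (hx : x ∈ S) : 0 < x.card :=
  Finset.card_pos.mpr (Finset.nonempty_iff_ne_empty.mpr (ne_of_mem_of_not_mem hx hS))

/-- The parity operator on the functions on `A`, equal to `(-1)^p` on `p`-simplices; the supertrace
of `X` is `(parity A * X).trace`. Its value on `∅`, where the exponent truncates, is junk. -/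
def parity (A : Finset (Finset ℕ)) : Matrix A A ℝ :=
  diagonal fun x => (-1) ^ ((x : Finset ℕ).card - 1)

variable {A : Finset (Finset ℕ)}

theorem trace_parity_mul (X : Matrix A A ℝ) :
    (parity A * X).trace = ∑ x : A, (-1 : ℝ) ^ ((x : Finset ℕ).card - 1) * X x x := by
  simp only [parity, trace, diag_apply, diagonal_mul]

theorem semiconjBy_parity_extDer (hA : ∅ ∉ A) : SemiconjBy (parity A) (extDer A) (-extDer A) := by
  ext x y
  rw [Matrix.neg_mul, neg_apply, parity, diagonal_mul, mul_diagonal, extDer, of_apply]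
  split_ifs with hxy
  · rw [hxy.2, Nat.add_sub_cancel, ← pow_sub_one_mul (card_pos_of_empty_notMem hA y.2).ne']
    ring
  · simp only [mul_zero, zero_mul, neg_zero]

theorem semiconjBy_parity_dirac (hA : ∅ ∉ A) : SemiconjBy (parity A) (dirac A) (-dirac A) := by
  have hd := semiconjBy_parity_extDer hA
  have hdT : SemiconjBy (parity A) (extDer A)ᵀ (-(extDer A)ᵀ) := by
    have h := congrArg transpose hd.eq
    rw [transpose_mul, transpose_mul, transpose_neg, parity, diagonal_transpose, ← parity] at h
    rw [SemiconjBy, Matrix.neg_mul, h, Matrix.mul_neg, neg_neg]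
  rw [dirac, neg_add]
  exact hd.add_right hdT

theorem trace_parity (hA : ∅ ∉ A) {N : ℕ} (hN : A.sup Finset.card ≤ N) :
    (parity A).trace = ∑ p ∈ Finset.range N, (-1 : ℝ) ^ p * (fvec A p : ℝ) := by
  have dim_lt : ∀ x ∈ A, x.card - 1 ∈ Finset.range N := fun x hx =>
    Finset.mem_range.mpr <|
      (Nat.sub_one_lt (card_pos_of_empty_notMem hA hx).ne').trans_le ((Finset.le_sup hx).trans hN)
  calc (parity A).trace = ∑ x ∈ A, (-1 : ℝ) ^ (x.card - 1) := by
        rw [parity, trace_diagonal, Finset.sum_coe_sort A fun x => (-1 : ℝ) ^ (x.card - 1)]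
    _ = ∑ p ∈ Finset.range N, ∑ x ∈ A with x.card - 1 = p, (-1 : ℝ) ^ p :=
        (Finset.sum_fiberwise_of_maps_to' dim_lt _).symm
    _ = ∑ p ∈ Finset.range N, (-1 : ℝ) ^ p * (fvec A p : ℝ) := by
        refine Finset.sum_congr rfl fun p _ => ?_
        have dim_eq_iff : ∀ x ∈ A, x.card - 1 = p ↔ x.card = p + 1 := fun x hx => by
          have := card_pos_of_empty_notMem hA hx
          omega
        rw [Finset.sum_const, nsmul_eq_mul, mul_comm, fvec, Finset.filter_congr dim_eq_iff]

theorem mckean_singer_general (hA : ∅ ∉ A) {N : ℕ} (hN : A.sup Finset.card ≤ N) (t : ℝ) :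
    ∑ x : A, (-1 : ℝ) ^ ((x : Finset ℕ).card - 1) * (NormedSpace.exp ((-t) • hodge A)) x x =
      ∑ p ∈ Finset.range N, (-1 : ℝ) ^ p * (fvec A p : ℝ) := by
  rw [← trace_parity_mul, hodge,
    trace_mul_exp_smul_sq_of_semiconjBy_neg (semiconjBy_parity_dirac hA), trace_parity hA hN]

end Supertrace

/-- **McKean–Singer symmetry.** For U = G \ K with K a subcomplex of the complex G
(the case K = ∅, U = G is allowed), the supertrace of the heat kernel exp(-t L_U) is
independent of t and equals the Euler characteristic Σ_p (-1)^p f_p(U). -/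
theorem mckean_singer (G K : Finset (Finset ℕ)) (hG : IsComplex G)
    (hKG : K ⊆ G) (hK : IsSubcomplex K) (t : ℝ) :
    ∑ x : (G \ K : Finset (Finset ℕ)),
        (-1 : ℝ) ^ ((x : Finset ℕ).card - 1) *
          (NormedSpace.exp ((-t) • hodge (G \ K))) x x =
      ∑ p ∈ Finset.range (G.sup Finset.card), (-1 : ℝ) ^ p * (fvec (G \ K) p : ℝ) :=
  mckean_singer_general (fun h => hG.2.1 (Finset.mem_sdiff.mp h).1)
    (Finset.sup_mono Finset.sdiff_subset) t
end

section
/- Realization of Betti vectors by open sets: For every finite sequence (β_0, β_1, …, β_q) of nonnegative integers there exist a finite abstract simplicial complex G and a subcomplex K ⊆ G such that the open complement U = G \ K satisfies b_p(U) = β_p for 0 ≤ p ≤ q and b_p(U) = 0 for p > q. -/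
/-!
If no member of `A` contains another, then the exterior derivative of `A` vanishes, so the Hodge
Laplacian vanishes and `b_p(A)` is the number of `p`-simplices in `A`. It is therefore enough to
take for `U` a set of facets of a complex: such a set is open and is an antichain. A disjoint union
of simplices has as many facets of each dimension as one likes; one additional simplex in each
dimension `p ≤ q` keeps the complex nonempty when `β` vanishes.
-/

open Matrix

section Antichain

variable {A : Finset (Finset ℕ)}

lemma extDer_eq_zero_of_isAntichain
    (hA : IsAntichain (· ⊆ ·) (A : Set (Finset ℕ))) : extDer A = 0 := by
  ext x y
  refine if_neg fun ⟨hyx, hcard⟩ ↦ ?_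
  rw [hA.eq y.2 x.2 hyx] at hcard
  omega

lemma hodge_eq_zero_of_extDer_eq_zero (hA : extDer A = 0) : hodge A = 0 := by
  simp [hodge, dirac, hA]

lemma betti_eq_card_of_hodge_eq_zero (hA : hodge A = 0) (p : ℕ) :
    betti A p = (A.filter fun x ↦ x.card = p + 1).card := by
  have hblock : hodgeBlock A p = 0 := by simp [hodgeBlock, hA]
  rw [betti, hblock, map_zero, LinearMap.ker_zero, finrank_top,
    Module.finrank_fintype_fun_eq_card, Fintype.card_coe]

lemma betti_eq_card_of_isAntichain
    (hA : IsAntichain (· ⊆ ·) (A : Set (Finset ℕ))) (p : ℕ) :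
    betti A p = (A.filter fun x ↦ x.card = p + 1).card :=
  betti_eq_card_of_hodge_eq_zero
    (hodge_eq_zero_of_extDer_eq_zero (extDer_eq_zero_of_isAntichain hA)) p

end Antichain

section SimplicialClosure

variable {α : Type*} [DecidableEq α]

/-- The simplicial complex generated by a family `F` of simplices: all nonempty faces of members
of `F`. -/
def simplicialClosure (F : Finset (Finset α)) : Finset (Finset α) :=
  F.biUnion fun x ↦ x.powerset.erase ∅

lemma mem_simplicialClosure {F : Finset (Finset α)} {y : Finset α} :
    y ∈ simplicialClosure F ↔ y.Nonempty ∧ ∃ x ∈ F, y ⊆ x := by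
  simp [simplicialClosure, Finset.nonempty_iff_ne_empty, and_left_comm]

lemma maximal_mem_simplicialClosure {F : Finset (Finset α)} {x : Finset α}
    (hF : IsAntichain (· ⊆ ·) (F : Set (Finset α))) (hx : x ∈ F) (hne : x.Nonempty) :
    Maximal (· ∈ simplicialClosure F) x := by
  refine ⟨mem_simplicialClosure.2 ⟨hne, x, hx, subset_rfl⟩, fun y hy hxy ↦ ?_⟩
  obtain ⟨-, z, hz, hyz⟩ := mem_simplicialClosure.1 hy
  rwa [hF.eq hx hz (hxy.trans hyz)]

lemma isComplex_simplicialClosure {F : Finset (Finset ℕ)} (hF : ∃ x ∈ F, x.Nonempty) :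
    IsComplex (simplicialClosure F) := by
  refine ⟨?_, fun hempty ↦ ?_, fun x hx y hyx hy ↦ ?_⟩
  · obtain ⟨x, hx, hne⟩ := hF
    exact ⟨x, mem_simplicialClosure.2 ⟨hne, x, hx, subset_rfl⟩⟩
  · exact Finset.not_nonempty_empty (mem_simplicialClosure.1 hempty).1
  · obtain ⟨-, z, hz, hxz⟩ := mem_simplicialClosure.1 hx
    exact mem_simplicialClosure.2 ⟨hy, z, hz, hyx.trans hxz⟩

end SimplicialClosure

lemma IsSubcomplex.sdiff_of_maximal {K U : Finset (Finset ℕ)} (hK : IsSubcomplex K)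
    (hU : ∀ x ∈ U, Maximal (· ∈ K) x) : IsSubcomplex (K \ U) := by
  intro x hx y hyx hy
  obtain ⟨hxK, hxU⟩ := Finset.mem_sdiff.1 hx
  refine Finset.mem_sdiff.2 ⟨hK x hxK y hyx hy, fun hyU ↦ hxU ?_⟩
  rwa [← (hU y hyU).eq_of_le hxK hyx]

section DisjointSimplices

/-- The `j`-th of countably many pairwise disjoint `p`-simplices. The pairing function keeps
simplices with different labels `(p, j)` disjoint. -/
def labelledSimplex (p j : ℕ) : Finset ℕ :=
  (Finset.range (p + 1)).image (Nat.pair (Nat.pair p j))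

lemma card_labelledSimplex (p j : ℕ) : (labelledSimplex p j).card = p + 1 := by
  rw [labelledSimplex, Finset.card_image_of_injective, Finset.card_range]
  exact fun a b h ↦ (Nat.pair_eq_pair.1 h).2

lemma labelledSimplex_nonempty (p j : ℕ) : (labelledSimplex p j).Nonempty :=
  Finset.nonempty_range_add_one.image _

lemma labelledSimplex_subset_iff {p j p' j' : ℕ} :
    labelledSimplex p j ⊆ labelledSimplex p' j' ↔ p = p' ∧ j = j' := by
  refine ⟨fun h ↦ ?_, by rintro ⟨rfl, rfl⟩; rfl⟩
  have hvertex : Nat.pair (Nat.pair p j) 0 ∈ labelledSimplex p' j' :=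
    h (Finset.mem_image_of_mem _ (by simp))
  obtain ⟨i, -, hi⟩ := Finset.mem_image.1 hvertex
  exact Nat.pair_eq_pair.1 (Nat.pair_eq_pair.1 hi).1.symm

lemma labelledSimplex_injective (p : ℕ) : Function.Injective (labelledSimplex p) :=
  fun _ _ h ↦ (labelledSimplex_subset_iff.1 h.subset).2

/-- A family of pairwise disjoint simplices with `β p` members of each dimension `p ≤ q`. -/
def disjointSimplices (q : ℕ) (β : ℕ → ℕ) : Finset (Finset ℕ) :=
  (Finset.range (q + 1)).biUnion fun p ↦ (Finset.range (β p)).image (labelledSimplex p)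

variable {q : ℕ} {β : ℕ → ℕ}

lemma mem_disjointSimplices {x : Finset ℕ} :
    x ∈ disjointSimplices q β ↔ ∃ p ≤ q, ∃ j < β p, labelledSimplex p j = x := by
  simp [disjointSimplices]

lemma nonempty_of_mem_disjointSimplices {x : Finset ℕ} (hx : x ∈ disjointSimplices q β) :
    x.Nonempty := by
  obtain ⟨p, -, j, -, rfl⟩ := mem_disjointSimplices.1 hx
  exact labelledSimplex_nonempty p j

lemma disjointSimplices_mono (q : ℕ) : Monotone (disjointSimplices q) :=
  fun _ _ h ↦ Finset.biUnion_mono fun p _ ↦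
    Finset.image_subset_image (Finset.range_mono (h p))

lemma isAntichain_disjointSimplices (q : ℕ) (β : ℕ → ℕ) :
    IsAntichain (· ⊆ ·) (disjointSimplices q β : Set (Finset ℕ)) := by
  intro x hx y hy hne hxy
  obtain ⟨p, -, j, -, rfl⟩ := mem_disjointSimplices.1 hx
  obtain ⟨p', -, j', -, rfl⟩ := mem_disjointSimplices.1 hy
  obtain ⟨rfl, rfl⟩ := labelledSimplex_subset_iff.1 hxy
  exact hne rfl

lemma filter_card_disjointSimplices_of_le {p : ℕ} (hp : p ≤ q) :
    (disjointSimplices q β).filter (fun x ↦ x.card = p + 1) =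
      (Finset.range (β p)).image (labelledSimplex p) := by
  ext x
  simp only [Finset.mem_filter, mem_disjointSimplices, Finset.mem_image, Finset.mem_range]
  constructor
  · rintro ⟨⟨p', -, j, hj, rfl⟩, hcard⟩
    obtain rfl : p' = p := by simpa [card_labelledSimplex] using hcard
    exact ⟨j, hj, rfl⟩
  · rintro ⟨j, hj, rfl⟩
    exact ⟨⟨p, hp, j, hj, rfl⟩, card_labelledSimplex p j⟩

lemma filter_card_disjointSimplices_of_lt {p : ℕ} (hp : q < p) :
    (disjointSimplices q β).filter (fun x ↦ x.card = p + 1) = ∅ := by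
  refine Finset.filter_eq_empty_iff.2 fun x hx hcard ↦ ?_
  obtain ⟨p', hp', j, -, rfl⟩ := mem_disjointSimplices.1 hx
  rw [card_labelledSimplex] at hcard
  omega

lemma betti_disjointSimplices_of_le {p : ℕ} (hp : p ≤ q) :
    betti (disjointSimplices q β) p = β p := by
  rw [betti_eq_card_of_isAntichain (isAntichain_disjointSimplices q β),
    filter_card_disjointSimplices_of_le hp,
    Finset.card_image_of_injective _ (labelledSimplex_injective p), Finset.card_range]

lemma betti_disjointSimplices_of_lt {p : ℕ} (hp : q < p) :
    betti (disjointSimplices q β) p = 0 := by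
  rw [betti_eq_card_of_isAntichain (isAntichain_disjointSimplices q β),
    filter_card_disjointSimplices_of_lt hp, Finset.card_empty]

end DisjointSimplices

/-- **Realization of Betti vectors by open sets.** For every finite sequence
(β 0, β 1, …, β q) of nonnegative integers there are a finite abstract simplicial
complex G and a subcomplex K ⊆ G whose open complement U = G \ K has b_p(U) = β p
for p ≤ q and b_p(U) = 0 for p > q. -/
theorem betti_realization (q : ℕ) (β : ℕ → ℕ) :
    ∃ G K : Finset (Finset ℕ), IsComplex G ∧ K ⊆ G ∧ IsSubcomplex K ∧
      (∀ p ≤ q, betti (G \ K) p = β p) ∧ (∀ p > q, betti (G \ K) p = 0) := by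
  let F := disjointSimplices q (β + 1)
  let U := disjointSimplices q β
  let G := simplicialClosure F
  have hUmax : ∀ x ∈ U, Maximal (· ∈ G) x := fun x hx ↦
    maximal_mem_simplicialClosure (isAntichain_disjointSimplices q (β + 1))
      (disjointSimplices_mono q le_self_add hx) (nonempty_of_mem_disjointSimplices hx)
  have hF : labelledSimplex 0 0 ∈ F :=
    mem_disjointSimplices.2 ⟨0, q.zero_le, 0, Nat.succ_pos _, rfl⟩
  have hG : IsComplex G :=
    isComplex_simplicialClosure ⟨_, hF, labelledSimplex_nonempty 0 0⟩
  have hGU : G \ (G \ U) = U := Finset.sdiff_sdiff_eq_self fun x hx ↦ (hUmax x hx).prop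
  refine ⟨G, G \ U, hG, Finset.sdiff_subset,
    IsSubcomplex.sdiff_of_maximal hG.2.2 hUmax, ?_, ?_⟩ <;> rw [hGU]
  · exact fun p hp ↦ betti_disjointSimplices_of_le hp
  · exact fun p hp ↦ betti_disjointSimplices_of_lt hp
end

section
/- Fixed point congruence: Let G be a finite abstract simplicial complex, p a prime, and π a permutation of ℕ with π^p = identity that maps G to itself (i.e., for every x ∈ G the image set π(x) belongs to G). Then the Euler characteristic satisfies χ(G) ≡ Σ_{x ∈ G, π(x) = x} (−1)^{|x|−1} (mod p), where χ(G) = Σ_{x ∈ G} (−1)^{|x|−1}. -/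
/-! A map of prime-power period `p ^ n` on a finite set has all its orbits of size `1` or a
multiple of `p`. The weight `(-1) ^ (|x| - 1)` is invariant under `π`, so `π` acts on each of its
level sets, and modulo `p` each level set has as many elements as it has fixed points. -/

section PrimePowerPeriod

open Function Finset

variable {α : Type*} [DecidableEq α] {p n : ℕ} [Fact p.Prime] {f : α → α} {s : Finset α}

theorem card_modEq_card_filter_fixed (hmaps : Set.MapsTo f s s)
    (hper : ∀ x ∈ s, IsPeriodicPt f (p ^ n) x) :
    #s ≡ #{x ∈ s | f x = x} [MOD p] := by
  let g : Function.End s := hmaps.restrict f s s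
  have hg : g ^ p ^ n = 1 := by
    funext x
    apply Subtype.ext
    calc ((g ^ p ^ n) x : α) = g^[p ^ n] x := rfl
      _ = f^[p ^ n] x := by rw [hmaps.iterate_restrict, Set.MapsTo.val_restrict_apply]
      _ = x := hper x x.2
  have hfixed : Fintype.card (fixedPoints g) = #{x ∈ s | f x = x} :=
    calc Fintype.card (fixedPoints g) = #(s.attach.filter fun x : s => f x = x) :=
          Fintype.card_of_subtype _ fun x => by
            simp only [mem_filter, mem_attach, true_and]
            exact (Subtype.ext_iff (a1 := g x) (a2 := x)).symm
      _ = #{x ∈ s | f x = x} := by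
          rw [filter_attach (fun x => f x = x), card_map, card_attach]
  simpa only [Fintype.card_coe, hfixed] using Equiv.Perm.card_fixedPoints_modEq hg

theorem sum_eq_sum_filter_fixed {M : Type*} [AddCommMonoid M] [Module (ZMod p) M] {w : α → M}
    (hmaps : Set.MapsTo f s s) (hper : ∀ x ∈ s, IsPeriodicPt f (p ^ n) x)
    (hw : ∀ x ∈ s, w (f x) = w x) :
    ∑ x ∈ s, w x = ∑ x ∈ s with f x = x, w x := by
  classical
  have sum_by_weight (t : Finset α) (hts : t ⊆ s) :
      ∑ x ∈ t, w x = ∑ c ∈ s.image w, (#{x ∈ t | w x = c} : ZMod p) • c := by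
    rw [← sum_fiberwise_of_maps_to fun x hx => mem_image_of_mem w (hts hx)]
    refine sum_congr rfl fun c _ => ?_
    rw [Nat.cast_smul_eq_nsmul]
    exact sum_eq_card_nsmul fun x hx => (mem_filter.1 hx).2
  rw [sum_by_weight s subset_rfl, sum_by_weight _ (s.filter_subset _)]
  refine sum_congr rfl fun c _ => congrArg (· • c) ?_
  rw [filter_comm, ZMod.natCast_eq_natCast_iff]
  refine card_modEq_card_filter_fixed (n := n) (fun x hx => ?_) fun x hx =>
    hper x (mem_of_mem_filter x hx)
  obtain ⟨hxs, hxc⟩ := mem_filter.1 hx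
  exact mem_filter.2 ⟨hmaps hxs, (hw x hxs).trans hxc⟩

end PrimePowerPeriod

theorem iterate_finset_image {α : Type*} [DecidableEq α] (f : α → α) (m : ℕ) :
    (Finset.image f)^[m] = Finset.image f^[m] := by
  induction m with
  | zero => exact funext fun _ => Finset.image_id.symm
  | succ m ih =>
    funext x
    rw [Function.iterate_succ_apply', ih, Finset.image_image, Function.iterate_succ']

theorem euler_char_fixed_point_congruence_general {α : Type*} [DecidableEq α]
    (G : Finset (Finset α)) {p n : ℕ} (hp : p.Prime) (π : Equiv.Perm α) (hπ : π ^ p ^ n = 1)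
    (hmaps : ∀ x ∈ G, x.image π ∈ G) :
    (∑ x ∈ G, (-1 : ℤ) ^ (x.card - 1)) ≡
      (∑ x ∈ G.filter (fun x => x.image π = x), (-1 : ℤ) ^ (x.card - 1)) [ZMOD (p : ℤ)] := by
  have : Fact p.Prime := ⟨hp⟩
  have hper (x : Finset α) : Function.IsPeriodicPt (Finset.image π) (p ^ n) x := by
    rw [Function.IsPeriodicPt, Function.IsFixedPt, iterate_finset_image,
      Equiv.Perm.iterate_eq_pow, hπ, Equiv.Perm.coe_one, Finset.image_id]
  have hcard (x : Finset α) : (x.image π).card = x.card :=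
    Finset.card_image_of_injective x π.injective
  rw [← ZMod.intCast_eq_intCast_iff, Int.cast_sum, Int.cast_sum]
  exact sum_eq_sum_filter_fixed hmaps (fun x _ => hper x) fun x _ => by rw [hcard]

/-- **Fixed point congruence.** If a permutation π of ℕ of order dividing a prime p maps
the finite abstract simplicial complex G to itself, then the Euler characteristic of G is
congruent mod p to the signed count of fixed simplices:
χ(G) ≡ Σ_{x ∈ G, π(x) = x} (-1)^{|x|-1} (mod p). -/
theorem euler_char_fixed_point_congruence (G : Finset (Finset ℕ)) (hG : IsComplex G)
    (p : ℕ) (hp : p.Prime) (π : Equiv.Perm ℕ) (hπ : π ^ p = 1)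
    (hmaps : ∀ x ∈ G, x.image π ∈ G) :
    (∑ x ∈ G, (-1 : ℤ) ^ (x.card - 1)) ≡
      (∑ x ∈ G.filter (fun x => x.image π = x), (-1 : ℤ) ^ (x.card - 1)) [ZMOD (p : ℤ)] :=
  euler_char_fixed_point_congruence_general (n := 1) G hp π (by rwa [pow_one]) hmaps
end
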